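/- arXiv:1007.0564 — 2 statements merged into one kernel-verified Lean document; each statement's English description precedes it below -/
import Mathlib

section
/- For every n ∈ ℕ there exists a polynomial P_n with nonnegative coefficients such that for all x ∈ ℝ^d and all φ in the Schwartz space S(ℝ^d), |τ_x φ|_n ≤ P_n(|x|) · |φ|_n, where τ_x φ(y) = φ(y − x) and |x| is the Euclidean norm of x. -/
open MeasureTheory

noncomputable def hermitePoly (n : ℕ) (x : ℝ) : ℝ :=
  (-1 : ℝ) ^ n * Real.exp (x ^ 2 / 2) *
    iteratedDeriv n (fun y : ℝ => Real.exp (-(y ^ 2 / 2))) x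

noncomputable def hermiteFun (n : ℕ) (x : ℝ) : ℝ :=
  (Real.sqrt (Real.sqrt (2 * Real.pi) * n.factorial))⁻¹ *
    Real.exp (-(x ^ 2 / 4)) * hermitePoly n x

noncomputable def hermiteFunMulti (d : ℕ) (α : Fin d → ℕ) (x : EuclideanSpace ℝ (Fin d)) : ℝ :=
  ∏ i, hermiteFun (α i) (x i)

noncomputable def hermCoeff (d : ℕ) (f : EuclideanSpace ℝ (Fin d) → ℝ) (β : Fin d → ℕ) : ℝ :=
  ∫ x, f x * hermiteFunMulti d β x

noncomputable def hermNorm (d n : ℕ) (f : EuclideanSpace ℝ (Fin d) → ℝ) : ℝ :=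
  Real.sqrt (∑' β : Fin d → ℕ,
    (((2 * ∑ i, β i) + d : ℕ) : ℝ) ^ (2 * n) * hermCoeff d f β ^ 2)


open Polynomial in
theorem hp_eq (n : ℕ) (x : ℝ) : hermitePoly n x = aeval x (hermite n) := by
  rw [hermitePoly, hermite_eq_deriv_gaussian', iteratedDeriv_eq_iterate]
  ring

open Polynomial in
theorem derivative_hermite (n : ℕ) :
    derivative (hermite (n + 1)) = ((n : ℤ[X]) + 1) * hermite n := by
  induction n with
  | zero => simp
  | succ n ih =>
    rw [hermite_succ (n + 1), derivative_sub, derivative_mul, derivative_X, ih, derivative_mul,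
      hermite_succ n]
    simp
    ring

noncomputable def hc (n : ℕ) : ℝ := (Real.sqrt (Real.sqrt (2 * Real.pi) * n.factorial))⁻¹

theorem hc_pos (n : ℕ) : 0 < hc n := by
  unfold hc; positivity

theorem hc_succ (n : ℕ) : Real.sqrt (n + 1 : ℝ) * hc (n + 1) = hc n := by
  unfold hc
  rw [Nat.factorial_succ]
  push_cast
  rw [show √(2 * Real.pi) * (((n : ℝ) + 1) * n.factorial) =
    ((n : ℝ) + 1) * (√(2 * Real.pi) * n.factorial) by ring, Real.sqrt_mul (by positivity)]
  have : √((n : ℝ) + 1) ≠ 0 := by positivity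
  field_simp

theorem hf_eq (n : ℕ) (x : ℝ) :
    hermiteFun n x = hc n * Real.exp (-(x ^ 2 / 4)) * Polynomial.aeval x (Polynomial.hermite n) := by
  rw [hermiteFun, hp_eq, hc]

/-- Derivative via the raising operator. -/
theorem hf_hasDerivAt (n : ℕ) (x : ℝ) :
    HasDerivAt (hermiteFun n)
      (x / 2 * hermiteFun n x - Real.sqrt (n + 1 : ℝ) * hermiteFun (n + 1) x) x := by
  have h1 : HasDerivAt (fun x : ℝ => Real.exp (-(x ^ 2 / 4)))
      (Real.exp (-(x ^ 2 / 4)) * (-(x / 2))) x := by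
    apply HasDerivAt.exp
    have := (((hasDerivAt_id x).pow 2).div_const 4).neg
    convert! this using 1
    simp; ring
  have h2 := (Polynomial.hermite n).hasDerivAt_aeval x
  have h3 := (h1.const_mul (hc n)).mul h2
  have h4 : hermiteFun n = fun x => hc n * Real.exp (-(x ^ 2 / 4)) *
      Polynomial.aeval x (Polynomial.hermite n) := by
    funext y; exact hf_eq n y
  rw [h4]
  convert! h3 using 1
  rw [hf_eq, Polynomial.hermite_succ, map_sub, map_mul, Polynomial.aeval_X, ← hc_succ n]
  ring

/-- Lowering operator identity. -/
theorem hf_recur (n : ℕ) (x : ℝ) :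
    x * hermiteFun (n + 1) x = Real.sqrt (n + 1 + 1 : ℝ) * hermiteFun (n + 2) x +
      Real.sqrt (n + 1 : ℝ) * hermiteFun n x := by
  have e1 := hc_succ n
  have e2 := hc_succ (n + 1)
  push_cast at e2
  have e3 : √((n : ℝ) + 1) * √((n : ℝ) + 1) = n + 1 := Real.mul_self_sqrt (by positivity)
  rw [hf_eq, hf_eq, hf_eq, Polynomial.hermite_succ (n + 1), derivative_hermite, ← e1, ← e2]
  simp only [map_sub, map_mul, Polynomial.aeval_X, map_add, map_one, map_natCast]
  linear_combination (-(√((n:ℝ) + 1 + 1) * hc (n + 1 + 1) *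
    Real.exp (-(x ^ 2 / 4)) * Polynomial.aeval x (Polynomial.hermite n))) * e3

theorem hf_recur_zero (x : ℝ) :
    x * hermiteFun 0 x = hermiteFun 1 x := by
  have e1 := hc_succ 0
  simp at e1
  rw [hf_eq, hf_eq, Polynomial.hermite_zero, Polynomial.hermite_one, e1]
  simp; ring

theorem hf_cont (n : ℕ) : Continuous (hermiteFun n) :=
  continuous_iff_continuousAt.2 fun x => (hf_hasDerivAt n x).continuousAt

theorem poly_gauss_int (b : ℝ) (hb : 0 < b) (p : Polynomial ℝ) :
    Integrable (fun x : ℝ => p.eval x * Real.exp (-b * x ^ 2)) := by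
  induction p using Polynomial.induction_on' with
  | add p q hp hq =>
    simp only [Polynomial.eval_add, add_mul]; exact hp.add hq
  | monomial n a =>
    have := integrable_rpow_mul_exp_neg_mul_sq hb (s := n) (by
      have : (0:ℝ) ≤ n := by positivity
      linarith)
    simp only [Real.rpow_natCast] at this
    simp only [Polynomial.eval_monomial, mul_assoc]
    exact this.const_mul a

theorem hf_int (n : ℕ) : Integrable (hermiteFun n) := by
  have := (poly_gauss_int (1/4) (by norm_num)
    ((Polynomial.hermite n).map (algebraMap ℤ ℝ))).const_mul (hc n)
  refine this.congr (Filter.Eventually.of_forall fun x => ?_)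
  simp only [hf_eq, Polynomial.eval_map_algebraMap]
  rw [show -(x ^ 2 / 4) = -(1/4) * x ^ 2 by ring]
  ring

theorem hf_mul_int (p : Polynomial ℝ) (n m : ℕ) :
    Integrable (fun x => p.eval x * (hermiteFun n x * hermiteFun m x)) := by
  have := (poly_gauss_int (1/2) (by norm_num)
    (p * ((Polynomial.hermite n).map (algebraMap ℤ ℝ) *
      (Polynomial.hermite m).map (algebraMap ℤ ℝ)))).const_mul (hc n * hc m)
  refine this.congr (Filter.Eventually.of_forall fun x => ?_)
  simp only [hf_eq, Polynomial.eval_mul, Polynomial.eval_map_algebraMap]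
  rw [show -(1/2) * x ^ 2 = -(x ^ 2 / 4) + -(x ^ 2 / 4) by ring, Real.exp_add]
  ring

theorem hf_mul_int' (n m : ℕ) :
    Integrable (fun x => hermiteFun n x * hermiteFun m x) := by
  simpa using hf_mul_int 1 n m

theorem hf_norm (n : ℕ) : ∫ x, hermiteFun n x ^ 2 = 1 := by
  induction n with
  | zero =>
    have : ∀ x, hermiteFun 0 x ^ 2 = (√(2 * Real.pi))⁻¹ * Real.exp (-(1/2) * x ^ 2) := by
      intro x
      rw [hf_eq, show -(1/2) * x ^ 2 = -(x ^ 2 / 4) + -(x ^ 2 / 4) by ring, Real.exp_add]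
      have : hc 0 ^ 2 = (√(2 * Real.pi))⁻¹ := by
        unfold hc; rw [inv_pow, Real.sq_sqrt (by positivity)]; simp
      rw [← this]
      simp; ring
    simp_rw [this]
    rw [integral_const_mul, integral_gaussian]
    rw [show Real.pi / (1/2) = 2 * Real.pi by ring]
    have : √(2 * Real.pi) ≠ 0 := by positivity
    field_simp
  | succ n ih =>
    have hs : √((n : ℝ) + 1) ≠ 0 := by positivity
    have hd : ∀ x, HasDerivAt (fun x => hermiteFun n x * hermiteFun (n + 1) x)
        (√((n : ℝ) + 1) * (hermiteFun n x ^ 2 - hermiteFun (n + 1) x ^ 2)) x := by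
      intro x
      have := (hf_hasDerivAt n x).mul (hf_hasDerivAt (n + 1) x)
      convert! this using 1
      have h := hf_recur n x
      push_cast
      linear_combination (-hermiteFun n x) * h
    have i1 : ∀ n, Integrable (fun x => hermiteFun n x ^ 2) := fun n => by
      simpa [sq] using hf_mul_int' n n
    have := integral_eq_zero_of_hasDerivAt_of_integrable hd
      (((i1 n).sub (i1 (n + 1))).const_mul _) (hf_mul_int' n (n + 1))
    rw [integral_const_mul, integral_sub (i1 n) (i1 (n + 1)), ih] at this
    rcases mul_eq_zero.1 this with h | h
    · exact absurd h hs
    · linarith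

abbrev EE (d : ℕ) := EuclideanSpace ℝ (Fin d)
abbrev SS (d : ℕ) := SchwartzMap (EuclideanSpace ℝ (Fin d)) ℝ

theorem hm_cont (d : ℕ) (β : Fin d → ℕ) : Continuous (hermiteFunMulti d β) := by
  unfold hermiteFunMulti
  refine continuous_finsetProd _ fun i _ => (hf_cont (β i)).comp ?_
  fun_prop

theorem hm_int (d : ℕ) (β : Fin d → ℕ) : Integrable (hermiteFunMulti d β) := by
  rw [← (PiLp.volume_preserving_toLp (Fin d)).integrable_comp_emb
    (MeasurableEquiv.toLp 2 _).measurableEmbedding]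
  exact Integrable.fintype_prod (f := fun i => hermiteFun (β i)) (fun i => hf_int (β i))

theorem hm_sq_int (d : ℕ) (β : Fin d → ℕ) : Integrable (fun x => hermiteFunMulti d β x ^ 2) := by
  rw [← (PiLp.volume_preserving_toLp (Fin d)).integrable_comp_emb
    (MeasurableEquiv.toLp 2 _).measurableEmbedding]
  have := Integrable.fintype_prod (f := fun i x => hermiteFun (β i) x ^ 2)
    (μ := fun _ => (volume : Measure ℝ)) (fun i => by simpa [sq] using hf_mul_int' (β i) (β i))
  refine this.congr (Filter.Eventually.of_forall fun x => ?_)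
  simp [hermiteFunMulti, Finset.prod_pow]

theorem hm_sq (d : ℕ) (β : Fin d → ℕ) : ∫ x, hermiteFunMulti d β x ^ 2 = 1 := by
  rw [← (PiLp.volume_preserving_toLp (Fin d)).integral_comp
    (MeasurableEquiv.toLp 2 _).measurableEmbedding]
  have := integral_fintype_prod_volume_eq_prod (fun (i : Fin d) x => hermiteFun (β i) x ^ 2)
  simp only [hf_norm, Finset.prod_const_one] at this
  rw [← this]
  simp [hermiteFunMulti, Finset.prod_pow]

/-- multi-index raised in direction `i` -/
def up {d : ℕ} (i : Fin d) (β : Fin d → ℕ) : Fin d → ℕ := Function.update β i (β i + 1)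

theorem up_inj {d : ℕ} (i : Fin d) : Function.Injective (up i) := by
  intro a b h
  funext j
  have := congrFun h j
  by_cases hj : j = i
  · subst hj; simpa [up] using this
  · simpa [up, hj] using this

theorem up_self {d : ℕ} (i : Fin d) (β : Fin d → ℕ) : up i β i = β i + 1 := by simp [up]

theorem up_range {d : ℕ} (i : Fin d) (β : Fin d → ℕ) (h : β i ≠ 0) : ∃ γ, up i γ = β := by
  refine ⟨Function.update β i (β i - 1), ?_⟩
  simp [up]
  rw [Nat.sub_add_cancel (by omega)]

theorem hm_split {d : ℕ} (i : Fin d) (β : Fin d → ℕ) (x : EE d) :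
    hermiteFunMulti d β x = hermiteFun (β i) (x i) *
      ∏ j ∈ Finset.univ.erase i, hermiteFun (β j) (x j) := by
  exact (Finset.mul_prod_erase Finset.univ (fun j => hermiteFun (β j) (x j))
    (Finset.mem_univ i)).symm

theorem hm_split_up {d : ℕ} (i : Fin d) (β : Fin d → ℕ) (x : EE d) :
    hermiteFunMulti d (up i β) x = hermiteFun (β i + 1) (x i) *
      ∏ j ∈ Finset.univ.erase i, hermiteFun (β j) (x j) := by
  rw [hm_split i, up_self]
  congr 1
  refine Finset.prod_congr rfl fun j hj => ?_
  simp [up, Finset.ne_of_mem_erase hj]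

noncomputable abbrev ee {d : ℕ} (i : Fin d) : EE d := EuclideanSpace.single i 1

theorem hm_lineDeriv {d : ℕ} (i : Fin d) (β : Fin d → ℕ) (x : EE d) :
    HasLineDerivAt ℝ (hermiteFunMulti d β)
      (x i / 2 * hermiteFunMulti d β x - √((β i : ℝ) + 1) * hermiteFunMulti d (up i β) x)
      x (ee i) := by
  unfold HasLineDerivAt
  have h1 : ∀ t : ℝ, hermiteFunMulti d β (x + t • ee i) = hermiteFun (β i) (x i + t) *
      ∏ j ∈ Finset.univ.erase i, hermiteFun (β j) (x j) := by
    intro t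
    rw [hm_split i]
    congr 1
    · simp [ee]
    · refine Finset.prod_congr rfl fun j hj => ?_
      simp [ee, Finset.ne_of_mem_erase hj]
  simp_rw [h1]
  have h2 : HasDerivAt (fun t : ℝ => x i + t) 1 0 := by
    simpa using (hasDerivAt_id (0:ℝ)).const_add (x i)
  have h3 := (hf_hasDerivAt (β i) (x i + 0)).comp 0 h2
  have h4 := h3.mul_const (∏ j ∈ Finset.univ.erase i, hermiteFun (β j) (x j))
  refine h4.congr_deriv ?_
  rw [hm_split i β x, hm_split_up i β x]
  simp
  ring

theorem hm_recur {d : ℕ} (i : Fin d) (β : Fin d → ℕ) (x : EE d) :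
    x i * hermiteFunMulti d (up i β) x =
      √((β i : ℝ) + 1 + 1) * hermiteFunMulti d (up i (up i β)) x +
      √((β i : ℝ) + 1) * hermiteFunMulti d β x := by
  rw [hm_split_up i (up i β) x, hm_split i (up i β) x, hm_split i β x, up_self]
  have := hf_recur (β i) (x i)
  have e : ∏ j ∈ Finset.univ.erase i, hermiteFun (up i β j) (x j) =
      ∏ j ∈ Finset.univ.erase i, hermiteFun (β j) (x j) := by
    refine Finset.prod_congr rfl fun j hj => ?_
    simp [up, Finset.ne_of_mem_erase hj]
  rw [e, ← mul_assoc, this]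
  ring

theorem hm_recur_zero {d : ℕ} (i : Fin d) (β : Fin d → ℕ) (hβ : β i = 0) (x : EE d) :
    x i * hermiteFunMulti d β x = hermiteFunMulti d (up i β) x := by
  rw [hm_split_up i β x, hm_split i β x, hβ, ← mul_assoc, hf_recur_zero]

/-! Schwartz side -/

theorem S_bdd {d : ℕ} (f : SS d) : ∃ C, ∀ x, ‖f x‖ ≤ C :=
  ⟨_, fun x => by simpa using f.le_seminorm ℝ 0 0 x⟩

theorem S_mul_int {d : ℕ} (f : SS d) (β : Fin d → ℕ) :
    Integrable (fun x => f x * hermiteFunMulti d β x) := by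
  obtain ⟨C, hC⟩ := S_bdd f
  exact (hm_int d β).bdd_mul (f.continuous.aestronglyMeasurable) (Filter.Eventually.of_forall hC)

noncomputable def cf {d : ℕ} (β : Fin d → ℕ) (f : SS d) : ℝ := hermCoeff d (fun z => f z) β

theorem cf_def {d : ℕ} (β : Fin d → ℕ) (f : SS d) : cf β f = ∫ x, f x * hermiteFunMulti d β x := rfl

noncomputable def cfL {d : ℕ} (β : Fin d → ℕ) : SS d →ₗ[ℝ] ℝ where
  toFun := cf β
  map_add' f g := by
    simp only [cf_def, add_apply, add_mul]
    exact integral_add (S_mul_int f β) (S_mul_int g β)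
  map_smul' a f := by
    simp only [cf_def, smul_apply, smul_eq_mul, mul_assoc, integral_const_mul,
      RingHom.id_apply]

theorem cfL_apply {d : ℕ} (β : Fin d → ℕ) (f : SS d) : cfL β f = cf β f := rfl

noncomputable def XX {d : ℕ} (i : Fin d) : SS d →L[ℝ] SS d :=
  SchwartzMap.smulLeftCLM ℝ (fun x : EE d => x i)

theorem XX_apply {d : ℕ} (i : Fin d) (f : SS d) (x : EE d) : XX i f x = x i * f x := by
  unfold XX
  rw [SchwartzMap.smulLeftCLM_apply_apply]
  · simp
  · exact (EuclideanSpace.proj (𝕜 := ℝ) i).hasTemperateGrowth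

noncomputable def DD {d : ℕ} (v : EE d) : SS d →L[ℝ] SS d :=
  LineDeriv.lineDerivOpCLM ℝ (SS d) v

theorem DD_apply {d : ℕ} (v : EE d) (f : SS d) (x : EE d) : DD v f x = fderiv ℝ f x v := rfl

theorem cf_DD {d : ℕ} (i : Fin d) (β : Fin d → ℕ) (f : SS d) :
    cf β (DD (ee i) f) = - (cf β (XX i f) / 2) + √((β i : ℝ) + 1) * cf (up i β) f := by
  have i1 : Integrable (fun x => f x * (x i / 2 * hermiteFunMulti d β x -
      √((β i : ℝ) + 1) * hermiteFunMulti d (up i β) x)) := by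
    refine (((S_mul_int (XX i f) β).const_mul (1/2)).sub
      ((S_mul_int f (up i β)).const_mul (√((β i : ℝ) + 1)))).congr
      (Filter.Eventually.of_forall fun x => ?_)
    simp only [XX_apply, Pi.sub_apply]
    ring
  have := integral_bilinear_hasLineDerivAt_right_eq_neg_left_of_integrable
    (B := ContinuousLinearMap.mul ℝ ℝ) (μ := volume) (v := ee i)
    (f := f) (f' := DD (ee i) f) (g := hermiteFunMulti d β)
    (g' := fun x => (x i / 2 * hermiteFunMulti d β x -
      √((β i : ℝ) + 1) * hermiteFunMulti d (up i β) x))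
    (S_mul_int (DD (ee i) f) β) i1 (S_mul_int f β)
    (fun x _ => (f.differentiableAt.hasFDerivAt.hasLineDerivAt (ee i)))
    (fun x _ => hm_lineDeriv i β x)
  simp only [ContinuousLinearMap.mul_apply'] at this
  rw [cf_def, ← neg_eq_iff_eq_neg.2 this]
  have e : ∀ x : EE d, f x * (x i / 2 * hermiteFunMulti d β x -
      √((β i : ℝ) + 1) * hermiteFunMulti d (up i β) x) =
      (1/2) * (XX i f x * hermiteFunMulti d β x) -
        √((β i : ℝ) + 1) * (f x * hermiteFunMulti d (up i β) x) := by
    intro x; rw [XX_apply]; ring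
  simp_rw [e]
  rw [integral_sub ((S_mul_int (XX i f) β).const_mul (1/2))
      ((S_mul_int f (up i β)).const_mul (√((β i : ℝ) + 1))), integral_const_mul, integral_const_mul,
      ← cf_def, ← cf_def]
  ring

theorem cf_XX_up {d : ℕ} (i : Fin d) (β : Fin d → ℕ) (f : SS d) :
    cf (up i β) (XX i f) = √((β i : ℝ) + 1 + 1) * cf (up i (up i β)) f +
      √((β i : ℝ) + 1) * cf β f := by
  have e : ∀ x : EE d, XX i f x * hermiteFunMulti d (up i β) x =
      √((β i : ℝ) + 1 + 1) * (f x * hermiteFunMulti d (up i (up i β)) x) +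
      √((β i : ℝ) + 1) * (f x * hermiteFunMulti d β x) := by
    intro x
    rw [XX_apply]
    linear_combination (f x) * hm_recur i β x
  simp only [cf_def, e]
  rw [integral_add ((S_mul_int f _).const_mul _) ((S_mul_int f _).const_mul _),
    integral_const_mul, integral_const_mul]

theorem cf_XX_zero {d : ℕ} (i : Fin d) (β : Fin d → ℕ) (hβ : β i = 0) (f : SS d) :
    cf β (XX i f) = cf (up i β) f := by
  simp only [cf_def]
  congr 1
  funext x
  rw [XX_apply, ← hm_recur_zero i β hβ]
  ring

noncomputable def AA {d : ℕ} (i : Fin d) : SS d →L[ℝ] SS d := (1/2 : ℝ) • XX i + DD (ee i)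
noncomputable def AD {d : ℕ} (i : Fin d) : SS d →L[ℝ] SS d := (1/2 : ℝ) • XX i - DD (ee i)

theorem cf_AA {d : ℕ} (i : Fin d) (β : Fin d → ℕ) (f : SS d) :
    cf β (AA i f) = √((β i : ℝ) + 1) * cf (up i β) f := by
  have : cf β (AA i f) = (1/2) * cf β (XX i f) + cf β (DD (ee i) f) := by
    simp only [← cfL_apply, AA]
    simp
  rw [this, cf_DD]; ring

theorem cf_AD' {d : ℕ} (i : Fin d) (β : Fin d → ℕ) (f : SS d) :
    cf β (AD i f) = (1/2) * cf β (XX i f) - cf β (DD (ee i) f) := by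
  simp only [← cfL_apply, AD]
  simp

theorem cf_AD_up {d : ℕ} (i : Fin d) (β : Fin d → ℕ) (f : SS d) :
    cf (up i β) (AD i f) = √((β i : ℝ) + 1) * cf β f := by
  rw [cf_AD', cf_DD, cf_XX_up, up_self]; push_cast; ring

theorem cf_AD_zero {d : ℕ} (i : Fin d) (β : Fin d → ℕ) (hβ : β i = 0) (f : SS d) :
    cf β (AD i f) = 0 := by
  rw [cf_AD', cf_DD, cf_XX_zero i β hβ, hβ]; simp; ring

theorem cf_DD_eq {d : ℕ} (i : Fin d) (β : Fin d → ℕ) (f : SS d) :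
    cf β (DD (ee i) f) = (1/2) * (√((β i : ℝ) + 1) * cf (up i β) f - cf β (AD i f)) := by
  rw [cf_AD', cf_DD]; ring

theorem cf_num {d : ℕ} (i : Fin d) (β : Fin d → ℕ) (f : SS d) :
    cf β (AD i (AA i f)) = β i * cf β f := by
  by_cases h : β i = 0
  · rw [cf_AD_zero i β h, h]; simp
  · obtain ⟨γ, rfl⟩ := up_range i β h
    rw [cf_AD_up, cf_AA, up_self, ← mul_assoc, Real.mul_self_sqrt (by positivity)]
    push_cast; ring

/-- the weight `2|β| + d` -/
noncomputable def mu {d : ℕ} (β : Fin d → ℕ) : ℝ := (((2 * ∑ i, β i) + d : ℕ) : ℝ)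

noncomputable def HH (d : ℕ) : SS d →L[ℝ] SS d :=
  ∑ i, ((2 : ℝ) • (AD i ∘L AA i) + ContinuousLinearMap.id ℝ _)

theorem cf_HH {d : ℕ} (β : Fin d → ℕ) (f : SS d) : cf β (HH d f) = mu β * cf β f := by
  have : cf β (HH d f) = ∑ i, (2 * cf β (AD i (AA i f)) + cf β f) := by
    simp only [← cfL_apply, HH]
    simp
  rw [this]
  simp only [cf_num, mu]
  rw [Finset.sum_add_distrib]
  push_cast
  simp only [Finset.sum_const, Finset.card_univ, Fintype.card_fin, nsmul_eq_mul, add_mul,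
    Finset.mul_sum, Finset.sum_mul, mul_assoc]

theorem cf_HH_pow {d : ℕ} (β : Fin d → ℕ) (k : ℕ) (f : SS d) :
    cf β ((HH d ^ k) f) = mu β ^ k * cf β f := by
  induction k with
  | zero => simp
  | succ k ih =>
    rw [pow_succ', mul_apply_eq_comp, cf_HH, ih]; ring

noncomputable abbrev tau {d : ℕ} (y : EE d) : SS d →L[ℝ] SS d := SchwartzMap.compSubConstCLM ℝ y

theorem S_sq_int {d : ℕ} (f : SS d) : Integrable (fun x => f x ^ 2) :=
  (f.memLp 2 volume).integrable_sq

theorem cf_le {d : ℕ} (β : Fin d → ℕ) (f : SS d) : |cf β f| ≤ ((∫ x, f x ^ 2) + 1) / 2 := by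
  rw [cf_def]
  have h1 : |∫ x, f x * hermiteFunMulti d β x| ≤ ∫ x, |f x * hermiteFunMulti d β x| :=
    abs_integral_le_integral_abs
  refine h1.trans ?_
  have h2 : ∫ x, |f x * hermiteFunMulti d β x| ≤
      ∫ x, (f x ^ 2 + hermiteFunMulti d β x ^ 2) / 2 := by
    refine integral_mono (S_mul_int f β).abs (((S_sq_int f).add (hm_sq_int d β)).div_const 2) ?_
    intro x
    simp only [abs_mul]
    have := two_mul_le_add_sq |f x| |hermiteFunMulti d β x|
    simp only [sq_abs] at this
    linarith
  refine h2.trans (le_of_eq ?_)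
  rw [integral_div, integral_add (S_sq_int f) (hm_sq_int d β), hm_sq]

theorem S_L2 {d : ℕ} (f : SS d) : ∫ x, f x ^ 2 = ‖SchwartzMap.toLpCLM ℝ ℝ 2 volume f‖ ^ 2 := by
  rw [SchwartzMap.toLpCLM_apply, SchwartzMap.norm_toLp' (by norm_num) (by norm_num)]
  simp only [ENNReal.toReal_ofNat, Real.rpow_ofNat, Real.norm_eq_abs, sq_abs]
  rw [← Real.rpow_natCast, ← Real.rpow_mul (integral_nonneg fun x => sq_nonneg _)]
  norm_num

theorem tau_seminorm {d : ℕ} (f : SS d) (R : ℝ) (k l : ℕ) :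
    ∃ C, 0 ≤ C ∧ ∀ y : EE d, ‖y‖ ≤ R → SchwartzMap.seminorm ℝ k l (tau y f) ≤ C := by
  by_cases hR : 0 ≤ R
  swap
  · exact ⟨0, le_rfl, fun y hy => absurd ((norm_nonneg y).trans hy) hR⟩
  refine ⟨2 ^ (k - 1) * (SchwartzMap.seminorm ℝ k l f + R ^ k * SchwartzMap.seminorm ℝ 0 l f),
    by positivity, fun y hy => ?_⟩
  refine SchwartzMap.seminorm_le_bound ℝ k l _ (by positivity) fun x => ?_
  have e : iteratedFDeriv ℝ l (tau y f) x = iteratedFDeriv ℝ l f (x - y) := by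
    have := iteratedFDeriv_comp_sub (𝕜 := ℝ) (f := f) l y x
    exact this
  rw [e]
  have h1 := f.le_seminorm ℝ k l (x - y)
  have h2 := f.le_seminorm ℝ 0 l (x - y)
  have h3 : ‖x‖ ^ k ≤ 2 ^ (k - 1) * (‖x - y‖ ^ k + R ^ k) := by
    refine le_trans (pow_le_pow_left₀ (norm_nonneg x) ?_ k) (add_pow_le (norm_nonneg _) hR k)
    have := norm_add_le (x - y) y
    rw [sub_add_cancel] at this
    linarith
  rw [pow_zero, one_mul] at h2
  calc ‖x‖ ^ k * ‖iteratedFDeriv ℝ l f (x - y)‖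
      ≤ 2 ^ (k - 1) * (‖x - y‖ ^ k + R ^ k) * ‖iteratedFDeriv ℝ l f (x - y)‖ := by gcongr
    _ = 2 ^ (k - 1) * (‖x - y‖ ^ k * ‖iteratedFDeriv ℝ l f (x - y)‖ +
          R ^ k * ‖iteratedFDeriv ℝ l f (x - y)‖) := by ring
    _ ≤ _ := by gcongr

theorem tau_bdd {d : ℕ} (f : SS d) (R : ℝ) (q : Seminorm ℝ (SS d)) (hq : Continuous q) :
    ∃ C, ∀ y : EE d, ‖y‖ ≤ R → q (tau y f) ≤ C := by
  obtain ⟨s, C, -, h⟩ := Seminorm.bound_of_continuous (schwartz_withSeminorms ℝ (EE d) ℝ) q hq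
  choose B hB0 hB using fun p : ℕ × ℕ => tau_seminorm f R p.1 p.2
  refine ⟨C * ∑ p ∈ s, B p, fun y hy => (h _).trans ?_⟩
  have : (s.sup (schwartzSeminormFamily ℝ (EE d) ℝ)) (tau y f) ≤ ∑ p ∈ s, B p := by
    refine Seminorm.finset_sup_apply_le (Finset.sum_nonneg fun p _ => hB0 p) fun p hp => ?_
    exact (hB p y hy).trans (Finset.single_le_sum (fun p _ => hB0 p) hp)
  exact mul_le_mul_of_nonneg_left this C.2

theorem decay {d : ℕ} (f : SS d) (R : ℝ) (k : ℕ) :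
    ∃ C, 0 ≤ C ∧ ∀ y : EE d, ‖y‖ ≤ R → ∀ β, mu β ^ k * |cf β (tau y f)| ≤ C := by
  let L := SchwartzMap.toLpCLM (E := EE d) ℝ ℝ 2 volume ∘L (HH d ^ k)
  let q : Seminorm ℝ (SS d) := (normSeminorm ℝ (Lp ℝ 2 (volume : Measure (EE d)))).comp L.toLinearMap
  have hq : Continuous q := continuous_norm.comp L.continuous
  obtain ⟨C, hC⟩ := tau_bdd f R q hq
  refine ⟨(C ^ 2 + 1) / 2, by positivity, fun y hy β => ?_⟩
  have h0 : 0 ≤ mu β := by unfold mu; positivity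
  have h1 := cf_le β ((HH d ^ k) (tau y f))
  rw [cf_HH_pow, abs_mul, abs_of_nonneg (pow_nonneg h0 k), S_L2] at h1
  have h2 : ‖SchwartzMap.toLpCLM ℝ ℝ 2 volume ((HH d ^ k) (tau y f))‖ ≤ C := hC y hy
  have h3 := pow_le_pow_left₀ (norm_nonneg _) h2 2
  linarith

theorem DD_tau {d : ℕ} (v y : EE d) (f : SS d) : DD v (tau y f) = tau y (DD v f) := by
  ext x
  have e := fderiv_comp_sub (𝕜 := ℝ) (f := f) (x := x) y
  have : fderiv ℝ (tau y f) x = fderiv ℝ f (x - y) := e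
  rw [DD_apply, this]
  rfl

theorem cf_tau_deriv {d : ℕ} (β : Fin d → ℕ) (f : SS d) (x : EE d) (t : ℝ) :
    HasDerivAt (fun t : ℝ => cf β (tau (t • x) f)) (- cf β (tau (t • x) (DD x f))) t := by
  obtain ⟨C, hC⟩ := S_bdd (DD x f)
  have := (hasDerivAt_integral_of_dominated_loc_of_deriv_le (μ := volume) (x₀ := t)
    (F := fun (t : ℝ) z => tau (t • x) f z * hermiteFunMulti d β z)
    (F' := fun (t : ℝ) z => - (tau (t • x) (DD x f) z * hermiteFunMulti d β z))
    (bound := fun z => C * |hermiteFunMulti d β z|) (s := Set.univ) Filter.univ_mem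
    (Filter.Eventually.of_forall fun t => (S_mul_int _ β).aestronglyMeasurable)
    (S_mul_int _ β) (S_mul_int _ β).neg.aestronglyMeasurable
    (Filter.Eventually.of_forall fun z t _ => ?_) ((hm_int d β).abs.const_mul C)
    (Filter.Eventually.of_forall fun z t _ => ?_)).2
  · rw [integral_neg] at this
    exact this
  · rw [norm_neg, norm_mul]
    exact mul_le_mul_of_nonneg_right (hC _) (norm_nonneg _)
  · rw [← neg_mul]
    refine HasDerivAt.mul_const ?_ _
    have h1 : HasDerivAt (fun t : ℝ => z - t • x) (-x) t := by
      simpa using ((hasDerivAt_id t).smul_const x).const_sub z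
    have h2 := (f.differentiableAt (x := z - t • x)).hasFDerivAt.comp_hasDerivAt t h1
    refine h2.congr_deriv ?_
    rw [map_neg]; rfl

theorem DD_sum {d : ℕ} (x : EE d) (f : SS d) : DD x f = ∑ i, x i • DD (ee i) f := by
  ext z
  have : x = ∑ i, x i • ee i := by
    ext j
    simp [ee, Finset.sum_apply, Pi.single_apply]
  simp only [sum_apply, smul_apply, DD_apply]
  conv_lhs => rw [this]
  rw [map_sum]
  simp

/-! summability -/

theorem mu_ge {d : ℕ} (i : Fin d) (β : Fin d → ℕ) : (β i : ℝ) + 1 ≤ mu β := by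
  unfold mu
  have h1 : β i ≤ ∑ j, β j := Finset.single_le_sum (fun _ _ => Nat.zero_le _) (Finset.mem_univ i)
  have h2 : 0 < d := i.pos
  exact_mod_cast (by omega : β i + 1 ≤ 2 * ∑ j, β j + d)

theorem mu_up {d : ℕ} (i : Fin d) (β : Fin d → ℕ) : mu (up i β) = mu β + 2 := by
  unfold mu
  have : ∑ j, up i β j = ∑ j, β j + 1 := by
    unfold up
    rw [Finset.sum_update_of_mem (Finset.mem_univ i), ← Finset.add_sum_erase _ _ (Finset.mem_univ i),
      Finset.sdiff_singleton_eq_erase]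
    ring
  rw [this]; push_cast; ring

theorem mu_one {d : ℕ} (hd : 0 < d) (β : Fin d → ℕ) : 1 ≤ mu β := by
  have := mu_ge ⟨0, hd⟩ β
  have : (0:ℝ) ≤ β ⟨0, hd⟩ := by positivity
  linarith

theorem mu_summable {d : ℕ} (hd : 0 < d) : Summable (fun β : Fin d → ℕ => (mu β ^ (2 * d))⁻¹) := by
  have h0 : Summable (fun n : ℕ => (((n : ℝ) + 1) ^ 2)⁻¹) := by
    have := (summable_nat_add_iff 1).2 (Real.summable_nat_pow_inv.2 (by norm_num : 1 < 2))
    simpa using this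
  have h1 : Summable (fun β : Fin d → ℕ => ∏ i, (((β i : ℝ) + 1) ^ 2)⁻¹) := by
    refine summable_of_sum_le (c := (∑' n : ℕ, (((n : ℝ) + 1) ^ 2)⁻¹) ^ d)
      (fun β => Finset.prod_nonneg fun i _ => by positivity) fun u => ?_
    obtain ⟨N, hN⟩ : ∃ N, ∀ β ∈ u, ∀ i, β i < N := by
      refine ⟨(u.sup fun β => ∑ i, β i) + 1, fun β hβ i => ?_⟩
      have h1 : β i ≤ ∑ j, β j :=
        Finset.single_le_sum (fun _ _ => Nat.zero_le _) (Finset.mem_univ i)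
      have h2 := Finset.le_sup (f := fun β : Fin d → ℕ => ∑ i, β i) hβ
      omega
    have hsub : u ⊆ Fintype.piFinset (fun _ : Fin d => Finset.range N) := by
      intro β hβ
      simp only [Fintype.mem_piFinset, Finset.mem_range]
      exact hN β hβ
    refine (Finset.sum_le_sum_of_subset_of_nonneg hsub fun β _ _ =>
      Finset.prod_nonneg fun i _ => by positivity).trans ?_
    rw [← Finset.prod_univ_sum (fun _ : Fin d => Finset.range N)
      (fun (_ : Fin d) (n : ℕ) => (((n : ℝ) + 1) ^ 2)⁻¹)]
    rw [Finset.prod_const, Finset.card_univ, Fintype.card_fin]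
    refine pow_le_pow_left₀ (Finset.sum_nonneg fun _ _ => by positivity) ?_ d
    exact h0.sum_le_tsum _ (fun _ _ => by positivity)
  refine Summable.of_nonneg_of_le (fun β => ?_) (fun β => ?_) h1
  · have := mu_one hd β
    positivity
  · rw [Finset.prod_inv_distrib]
    refine inv_anti₀ (Finset.prod_pos fun i _ => by positivity) ?_
    rw [Finset.prod_pow, pow_mul']
    refine pow_le_pow_left₀ (Finset.prod_nonneg fun i _ => by positivity) ?_ 2
    calc ∏ i, ((β i : ℝ) + 1) ≤ ∏ _i : Fin d, mu β :=
          Finset.prod_le_prod (fun i _ => by positivity) fun i _ => mu_ge i β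
      _ = mu β ^ d := by simp

noncomputable def ww {d : ℕ} (s : ℕ) (β : Fin d → ℕ) : ℝ := √(mu β) ^ s

noncomputable def FF {d : ℕ} (s : ℕ) (f : SS d) : ℝ := ∑' β : Fin d → ℕ, ww s β * cf β f ^ 2

theorem ww_nonneg {d : ℕ} (s : ℕ) (β : Fin d → ℕ) : 0 ≤ ww s β := by unfold ww; positivity

theorem term_bound {d : ℕ} (hd : 0 < d) (s : ℕ) (f g : SS d) (R : ℝ) :
    ∃ C, 0 ≤ C ∧ ∀ y : EE d, ‖y‖ ≤ R → ∀ β,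
      ‖ww s β * (cf β (tau y f) * cf β (tau y g))‖ ≤ C * (mu β ^ (2 * d))⁻¹ := by
  obtain ⟨C1, h1, H1⟩ := decay f R (s + 2 * d)
  obtain ⟨C2, h2, H2⟩ := decay g R 0
  refine ⟨C1 * C2, by positivity, fun y hy β => ?_⟩
  have hm := mu_one hd β
  have hm0 : 0 < mu β := by linarith
  have e1 := H1 y hy β
  have e2 := H2 y hy β
  rw [pow_zero, one_mul] at e2
  rw [← div_eq_mul_inv, le_div_iff₀ (by positivity), norm_mul, norm_mul, Real.norm_eq_abs,
    Real.norm_eq_abs, Real.norm_eq_abs, abs_of_nonneg (ww_nonneg s β)]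
  have e3 : ww s β ≤ mu β ^ s := by
    unfold ww
    refine pow_le_pow_left₀ (Real.sqrt_nonneg _) ?_ s
    rw [Real.sqrt_le_left hm0.le]
    nlinarith
  calc ww s β * (|cf β (tau y f)| * |cf β (tau y g)|) * mu β ^ (2 * d)
      ≤ mu β ^ s * (|cf β (tau y f)| * |cf β (tau y g)|) * mu β ^ (2 * d) := by gcongr
    _ = (mu β ^ (s + 2 * d) * |cf β (tau y f)|) * |cf β (tau y g)| := by rw [pow_add]; ring
    _ ≤ C1 * C2 := by gcongr

theorem tau_zero {d : ℕ} (f : SS d) : tau 0 f = f := by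
  ext x; simp [tau]

theorem term_summable {d : ℕ} (hd : 0 < d) (s : ℕ) (f g : SS d) :
    Summable (fun β => ww s β * (cf β f * cf β g)) := by
  obtain ⟨C, -, h⟩ := term_bound hd s f g 0
  refine Summable.of_norm_bounded ((mu_summable hd).mul_left C) fun β => ?_
  have := h 0 (by simp) β
  rwa [tau_zero, tau_zero] at this

theorem FF_summable {d : ℕ} (hd : 0 < d) (s : ℕ) (f : SS d) :
    Summable (fun β => ww s β * cf β f ^ 2) := by
  simpa [sq] using term_summable hd s f f

theorem FF_nonneg {d : ℕ} (s : ℕ) (f : SS d) : 0 ≤ FF s f :=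
  tsum_nonneg fun β => mul_nonneg (ww_nonneg s β) (sq_nonneg _)

theorem FF_mono {d : ℕ} (hd : 0 < d) (s : ℕ) (f : SS d) : FF s f ≤ FF (s + 1) f := by
  refine (FF_summable hd s f).tsum_le_tsum (fun β => ?_) (FF_summable hd (s + 1) f)
  refine mul_le_mul_of_nonneg_right ?_ (sq_nonneg _)
  unfold ww
  refine pow_le_pow_right₀ ?_ (Nat.le_succ s)
  exact Real.one_le_sqrt.2 (mu_one hd β)

/-- derivative of the energy -/
noncomputable def GG {d : ℕ} (s : ℕ) (x : EE d) (g : SS d) : ℝ :=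
  ∑' β : Fin d → ℕ, ww s β * (2 * cf β g * (- cf β (DD x g)))

theorem FF_deriv {d : ℕ} (hd : 0 < d) (s : ℕ) (f : SS d) (x : EE d) (t : ℝ)
    (ht : t ∈ Set.Ioo (-1 : ℝ) 2) :
    HasDerivAt (fun t : ℝ => FF s (tau (t • x) f)) (GG s x (tau (t • x) f)) t := by
  obtain ⟨C, hC, h⟩ := term_bound hd s f (DD x f) (2 * ‖x‖)
  have h0 : (0 : ℝ) ∈ Set.Ioo (-1 : ℝ) 2 := by constructor <;> norm_num
  refine hasDerivAt_tsum_of_isPreconnected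
    (g := fun β (t : ℝ) => ww s β * cf β (tau (t • x) f) ^ 2)
    (g' := fun β (t : ℝ) => ww s β * (2 * cf β (tau (t • x) f) * (- cf β (DD x (tau (t • x) f)))))
    (((mu_summable hd).mul_left C).mul_left 2) isOpen_Ioo isPreconnected_Ioo
    (fun β t _ => ?_) (fun β t ht => ?_) h0 (FF_summable hd s _) ht
  · have := ((cf_tau_deriv β f x t).pow 2).const_mul (ww s β)
    refine this.congr_deriv ?_
    rw [DD_tau]
    simp
  · have e := h (t • x) (by
      rw [norm_smul]
      refine mul_le_mul_of_nonneg_right ?_ (norm_nonneg x)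
      rw [Real.norm_eq_abs, abs_le]
      constructor <;> linarith [ht.1, ht.2]) β
    rw [DD_tau, show ww s β * (2 * cf β (tau (t • x) f) * (- cf β (tau (t • x) (DD x f)))) =
      (-2) * (ww s β * (cf β (tau (t • x) f) * cf β (tau (t • x) (DD x f)))) by ring, norm_mul]
    norm_num at e ⊢
    linarith

theorem pow_diff (s : ℕ) (r R : ℝ) (hr : 0 ≤ r) (h : r ≤ R) :
    R ^ (s + 1) - r ^ (s + 1) ≤ (s + 1) * R ^ s * (R - r) := by
  induction s with
  | zero => simp
  | succ s ih =>
    have hR : 0 ≤ R := hr.trans h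
    have h1 : r ^ (s + 1) ≤ R ^ (s + 1) := pow_le_pow_left₀ hr h _
    have h2 : r ^ (s + 1) * (R - r) ≤ R ^ (s + 1) * (R - r) :=
      mul_le_mul_of_nonneg_right h1 (by linarith)
    have h3 := mul_le_mul_of_nonneg_left ih hR
    push_cast
    calc R ^ (s + 1 + 1) - r ^ (s + 1 + 1)
        = R * (R ^ (s + 1) - r ^ (s + 1)) + r ^ (s + 1) * (R - r) := by ring
      _ ≤ R * ((s + 1) * R ^ s * (R - r)) + R ^ (s + 1) * (R - r) := by linarith
      _ = _ := by ring

theorem weight_diff {d : ℕ} (s : ℕ) (i : Fin d) (β : Fin d → ℕ) :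
    0 ≤ √((β i : ℝ) + 1) * (ww (s + 1) (up i β) - ww (s + 1) β) ∧
    √((β i : ℝ) + 1) * (ww (s + 1) (up i β) - ww (s + 1) β) ≤ (s + 1) * 2 ^ s * ww s β ∧
    ww s β ≤ ww s (up i β) := by
  unfold ww
  rw [mu_up]
  have hm := mu_one i.pos β
  have hm0 : 0 ≤ mu β := by linarith
  set r := √(mu β) with hrdef
  set R := √(mu β + 2) with hRdef
  have hr0 : 0 ≤ r := Real.sqrt_nonneg _
  have hR0 : 0 ≤ R := Real.sqrt_nonneg _
  have hr2 : r * r = mu β := Real.mul_self_sqrt hm0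
  have hR2 : R * R = mu β + 2 := Real.mul_self_sqrt (by linarith)
  have hrR : r ≤ R := Real.sqrt_le_sqrt (by linarith)
  have hR2r : R ≤ 2 * r := by
    by_contra hh
    push Not at hh
    nlinarith
  have hb : √((β i : ℝ) + 1) ≤ r := Real.sqrt_le_sqrt (mu_ge i β)
  have hp : r ^ (s + 1) ≤ R ^ (s + 1) := pow_le_pow_left₀ hr0 hrR _
  refine ⟨mul_nonneg (Real.sqrt_nonneg _) (by linarith), ?_, pow_le_pow_left₀ hr0 hrR _⟩
  have hd : r * (R - r) ≤ 1 := by nlinarith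
  calc √((β i : ℝ) + 1) * (R ^ (s + 1) - r ^ (s + 1))
      ≤ r * ((s + 1) * R ^ s * (R - r)) :=
        mul_le_mul hb (pow_diff s r R hr0 hrR) (by linarith) hr0
    _ = (s + 1) * R ^ s * (r * (R - r)) := by ring
    _ ≤ (s + 1) * R ^ s * 1 := by gcongr
    _ ≤ (s + 1) * (2 * r) ^ s * 1 := by gcongr
    _ = _ := by rw [mul_pow]; ring

theorem G_dir {d : ℕ} (s : ℕ) (i : Fin d) (g : SS d) :
    ∑' β, ww s β * (cf β g * cf β (AD i g)) - ∑' β, ww s β * (cf β g * cf β (AA i g)) =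
    ∑' β, √((β i : ℝ) + 1) * (ww s (up i β) - ww s β) * (cf β g * cf (up i β) g) ∧
    Summable (fun β => √((β i : ℝ) + 1) * (ww s (up i β) - ww s β) * (cf β g * cf (up i β) g)) := by
  have hd := i.pos
  have s1 := term_summable hd s g (AD i g)
  have s2 := term_summable hd s g (AA i g)
  have s3 := s1.comp_injective (up_inj i)
  have e1 : ∑' β, ww s β * (cf β g * cf β (AD i g)) =
      ∑' β, ww s (up i β) * (cf (up i β) g * cf (up i β) (AD i g)) := by
    refine ((up_inj i).tsum_eq (f := fun β => ww s β * (cf β g * cf β (AD i g))) ?_).symm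
    intro β hβ
    by_contra hn
    apply hβ
    have : β i = 0 := by
      by_contra h
      obtain ⟨γ, hγ⟩ := up_range i β h
      exact hn ⟨γ, hγ⟩
    simp [cf_AD_zero i β this]
  have e2 : ∀ β, ww s (up i β) * (cf (up i β) g * cf (up i β) (AD i g)) -
      ww s β * (cf β g * cf β (AA i g)) =
      √((β i : ℝ) + 1) * (ww s (up i β) - ww s β) * (cf β g * cf (up i β) g) := by
    intro β
    rw [cf_AD_up, cf_AA]; ring
  rw [e1]
  constructor
  · rw [← Summable.tsum_sub (by exact s3) s2]
    exact tsum_congr e2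
  · exact (s3.sub s2).congr e2

theorem GG_eq {d : ℕ} (hd : 0 < d) (s : ℕ) (x : EE d) (g : SS d) :
    GG s x g = ∑ i, x i *
      ∑' β, √((β i : ℝ) + 1) * (ww s (up i β) - ww s β) * (cf β g * cf (up i β) g) := by
  have e : ∀ β : Fin d → ℕ, ww s β * (2 * cf β g * (- cf β (DD x g))) =
      ∑ i, x i * (ww s β * (cf β g * cf β (AD i g)) - ww s β * (cf β g * cf β (AA i g))) := by
    intro β
    have : cf β (DD x g) = ∑ i, x i * cf β (DD (ee i) g) := by
      rw [DD_sum]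
      simp only [← cfL_apply]
      simp
    rw [this, ← Finset.sum_neg_distrib, Finset.mul_sum, Finset.mul_sum]
    refine Finset.sum_congr rfl fun i _ => ?_
    rw [cf_DD_eq, cf_AA]; ring
  unfold GG
  simp_rw [e]
  rw [Summable.tsum_finsetSum]
  · refine Finset.sum_congr rfl fun i _ => ?_
    rw [tsum_mul_left, Summable.tsum_sub (term_summable hd s g _) (term_summable hd s g _),
      (G_dir s i g).1]
  · intro i _
    exact ((term_summable hd s g _).sub (term_summable hd s g _)).mul_left _

theorem GG_zero {d : ℕ} (hd : 0 < d) (x : EE d) (g : SS d) : GG 0 x g = 0 := by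
  rw [GG_eq hd]
  simp [ww]

theorem G_dir_bound {d : ℕ} (s : ℕ) (i : Fin d) (g : SS d) :
    |∑' β, √((β i : ℝ) + 1) * (ww (s + 1) (up i β) - ww (s + 1) β) * (cf β g * cf (up i β) g)| ≤
      (s + 1) * 2 ^ s * FF s g := by
  have hd := i.pos
  have hS := (G_dir (s + 1) i g).2
  have f1 := FF_summable hd s g
  have f2 := f1.comp_injective (up_inj i)
  have f3 := (f1.add f2).mul_left (((s : ℝ) + 1) * 2 ^ s / 2)
  rw [← Real.norm_eq_abs]
  refine (norm_tsum_le_tsum_norm hS.norm).trans ?_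
  have key : ∑' β, ‖√((β i : ℝ) + 1) * (ww (s + 1) (up i β) - ww (s + 1) β) *
      (cf β g * cf (up i β) g)‖ ≤ ∑' β, (((s : ℝ) + 1) * 2 ^ s / 2) *
        (ww s β * cf β g ^ 2 + ww s (up i β) * cf (up i β) g ^ 2) := by
    refine hS.norm.tsum_le_tsum (fun β => ?_) f3
    obtain ⟨h1, h2, h3⟩ := weight_diff s i β
    rw [norm_mul, Real.norm_eq_abs, abs_of_nonneg h1, Real.norm_eq_abs, abs_mul]
    have h4 := two_mul_le_add_sq |cf β g| |cf (up i β) g|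
    simp only [sq_abs] at h4
    have h5 : ww s β * cf (up i β) g ^ 2 ≤ ww s (up i β) * cf (up i β) g ^ 2 :=
      mul_le_mul_of_nonneg_right h3 (sq_nonneg _)
    have h6 := ww_nonneg s β
    calc _ ≤ (s + 1) * 2 ^ s * ww s β * (|cf β g| * |cf (up i β) g|) := by gcongr
      _ ≤ (s + 1) * 2 ^ s * ww s β * ((cf β g ^ 2 + cf (up i β) g ^ 2) / 2) := by
          gcongr; linarith
      _ = (((s : ℝ) + 1) * 2 ^ s / 2) * (ww s β * cf β g ^ 2 + ww s β * cf (up i β) g ^ 2) := by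
          ring
      _ ≤ _ := by gcongr
  refine key.trans ?_
  rw [tsum_mul_left, Summable.tsum_add f1 (by exact f2)]
  have f4 : ∑' β, ww s (up i β) * cf (up i β) g ^ 2 ≤ FF s g :=
    tsum_comp_le_tsum_of_inj f1 (fun β => mul_nonneg (ww_nonneg s β) (sq_nonneg _)) (up_inj i)
  calc (((s : ℝ) + 1) * 2 ^ s / 2) * (FF s g + ∑' β, ww s (up i β) * cf (up i β) g ^ 2)
      ≤ (((s : ℝ) + 1) * 2 ^ s / 2) * (FF s g + FF s g) := by gcongr
    _ = _ := by ring

theorem GG_bound {d : ℕ} (hd : 0 < d) (s : ℕ) (x : EE d) (g : SS d) :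
    |GG (s + 1) x g| ≤ (d * ((s + 1) * 2 ^ s)) * ‖x‖ * FF s g := by
  rw [GG_eq hd]
  refine (Finset.abs_sum_le_sum_abs _ _).trans ?_
  have : ∀ i ∈ (Finset.univ : Finset (Fin d)), |x i * ∑' β, √((β i : ℝ) + 1) *
      (ww (s + 1) (up i β) - ww (s + 1) β) * (cf β g * cf (up i β) g)| ≤
      ‖x‖ * ((s + 1) * 2 ^ s * FF s g) := by
    intro i _
    rw [abs_mul]
    exact mul_le_mul (PiLp.norm_apply_le x i) (G_dir_bound s i g) (abs_nonneg _) (norm_nonneg _)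
  refine (Finset.sum_le_sum this).trans (le_of_eq ?_)
  simp
  ring

theorem FF_main {d : ℕ} (hd : 0 < d) (s : ℕ) :
    ∃ Q : Polynomial ℝ, (∀ k, 0 ≤ Q.coeff k) ∧ ∀ (x : EE d) (f : SS d) (t : ℝ),
      t ∈ Set.Icc (0 : ℝ) 1 → FF s (tau (t • x) f) ≤ Q.eval ‖x‖ * FF s f := by
  have mvt : ∀ (s : ℕ) (x : EE d) (f : SS d) (C : ℝ),
      (∀ t ∈ Set.Icc (0 : ℝ) 1, |GG s x (tau (t • x) f)| ≤ C) →
      ∀ t ∈ Set.Icc (0 : ℝ) 1, FF s (tau (t • x) f) ≤ FF s f + C := by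
    intro s x f C hC t ht
    have h0 : (0 : ℝ) ∈ Set.Icc (0 : ℝ) 1 := by simp
    have := Convex.norm_image_sub_le_of_norm_hasDerivWithin_le
      (f := fun t : ℝ => FF s (tau (t • x) f)) (f' := fun t => GG s x (tau (t • x) f))
      (s := Set.Icc (0 : ℝ) 1) (C := C)
      (fun t ht => (FF_deriv hd s f x t
        ⟨by linarith [ht.1], by linarith [ht.2]⟩).hasDerivWithinAt)
      hC (convex_Icc 0 1) h0 ht
    simp only [zero_smul, tau_zero, sub_zero, Real.norm_eq_abs] at this
    have hC0 : 0 ≤ C := (abs_nonneg _).trans (hC 0 h0)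
    rw [abs_of_nonneg ht.1] at this
    have h2 := le_abs_self (FF s (tau (t • x) f) - FF s f)
    have h3 : C * t ≤ C := mul_le_of_le_one_right hC0 ht.2
    linarith
  induction s with
  | zero =>
    refine ⟨1, fun k => ?_, fun x f t ht => ?_⟩
    · rw [Polynomial.coeff_one]; split_ifs <;> norm_num
    · have := mvt 0 x f 0 (fun t _ => by rw [GG_zero hd]; simp) t ht
      simpa using this
  | succ s ih =>
    obtain ⟨Q, hQ, H⟩ := ih
    refine ⟨1 + Polynomial.C (d * ((s + 1) * 2 ^ s) : ℝ) * (Polynomial.X * Q),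
      fun k => ?_, fun x f t ht => ?_⟩
    · rw [Polynomial.coeff_add, Polynomial.coeff_C_mul, Polynomial.coeff_one]
      refine add_nonneg (by split_ifs <;> norm_num) (mul_nonneg (by positivity) ?_)
      cases k with
      | zero => simp
      | succ k => rw [Polynomial.coeff_X_mul]; exact hQ k
    · have hQ0 : 0 ≤ Q.eval ‖x‖ := by
        rw [Polynomial.eval_eq_sum_range]
        exact Finset.sum_nonneg fun k _ => mul_nonneg (hQ k) (by positivity)
      have := mvt (s + 1) x f ((d * ((s + 1) * 2 ^ s)) * ‖x‖ * (Q.eval ‖x‖ * FF (s + 1) f))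
        (fun t ht => (GG_bound hd s x _).trans ?_) t ht
      · simp only [Polynomial.eval_add, Polynomial.eval_one, Polynomial.eval_mul,
          Polynomial.eval_C, Polynomial.eval_X]
        linarith
      · refine mul_le_mul_of_nonneg_left ((H x f t ht).trans ?_) (by positivity)
        exact mul_le_mul_of_nonneg_left (FF_mono hd s f) hQ0

theorem hermNorm_eq {d : ℕ} (n : ℕ) (f : SS d) : hermNorm d n (fun z => f z) = √(FF (4 * n) f) := by
  unfold hermNorm FF
  congr 1
  refine tsum_congr fun β => ?_
  have : ww (4 * n) β = mu β ^ (2 * n) := by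
    unfold ww
    rw [show 4 * n = 2 * (2 * n) by ring, pow_mul, Real.sq_sqrt (by unfold mu; positivity)]
  rw [this]
  rfl

/-- For every `n` there is a polynomial `P_n` with nonnegative coefficients such
that `|τ_x φ|_n ≤ P_n(|x|) |φ|_n` for all `x ∈ ℝ^d` and all Schwartz `φ`,
where `τ_x φ (y) = φ (y - x)`. -/
theorem hermNorm_translate_le (d n : ℕ) :
    ∃ P : Polynomial ℝ, (∀ k, 0 ≤ P.coeff k) ∧
      ∀ (x : EuclideanSpace ℝ (Fin d))
        (φ ψ : SchwartzMap (EuclideanSpace ℝ (Fin d)) ℝ),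
        (∀ y, ψ y = φ (y - x)) →
        hermNorm d n (fun z => ψ z) ≤ P.eval ‖x‖ * hermNorm d n (fun z => φ z) := by
  rcases Nat.eq_zero_or_pos d with hd | hd
  · subst hd
    refine ⟨1, fun k => ?_, fun x φ ψ h => ?_⟩
    · rw [Polynomial.coeff_one]; split_ifs <;> norm_num
    · have : ψ = φ := by
        ext y; rw [h y]; congr 1; exact Subsingleton.elim _ _
      rw [this]; simp
  · obtain ⟨Q, hQ, H⟩ := FF_main hd (4 * n)
    refine ⟨1 + Q, fun k => ?_, fun x φ ψ h => ?_⟩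
    · rw [Polynomial.coeff_add, Polynomial.coeff_one]
      exact add_nonneg (by split_ifs <;> norm_num) (hQ k)
    · have e : ψ = tau ((1 : ℝ) • x) φ := by
        ext y; rw [h y, one_smul]; rfl
      have hQ0 : 0 ≤ Q.eval ‖x‖ := by
        rw [Polynomial.eval_eq_sum_range]
        exact Finset.sum_nonneg fun k _ => mul_nonneg (hQ k) (by positivity)
      have h1 := H x φ 1 (by simp)
      rw [← e] at h1
      have h2 := FF_nonneg (4 * n) φ
      rw [hermNorm_eq, hermNorm_eq]
      refine Real.sqrt_le_iff.2 ⟨?_, ?_⟩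
      · simp only [Polynomial.eval_add, Polynomial.eval_one]; positivity
      · rw [mul_pow, Real.sq_sqrt h2]
        refine h1.trans (mul_le_mul_of_nonneg_right ?_ h2)
        simp only [Polynomial.eval_add, Polynomial.eval_one]
        nlinarith
end

section
/- For every n ∈ ℕ there exist r, s ∈ ℕ and a constant C_n ∈ ℝ such that for all φ, ψ in the Schwartz space S(ℝ^d), |φψ|_n ≤ C_n · |φ|_r · |ψ|_s, where φψ denotes the pointwise product. -/
open MeasureTheory

namespace HermAux

noncomputable def cc (n : ℕ) : ℝ := (Real.sqrt (Real.sqrt (2 * Real.pi) * n.factorial))⁻¹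

lemma cc_pos (n : ℕ) : 0 < cc n := by
  unfold cc; positivity

lemma cc_succ (n : ℕ) : Real.sqrt (n + 1) * cc (n + 1) = cc n := by
  unfold cc
  rw [Nat.factorial_succ]
  push_cast
  rw [show Real.sqrt (2 * Real.pi) * (((n : ℝ) + 1) * n.factorial)
    = ((n : ℝ) + 1) * (Real.sqrt (2 * Real.pi) * n.factorial) by ring,
    Real.sqrt_mul (by positivity), mul_inv, ← mul_assoc, mul_inv_cancel₀ (by positivity), one_mul]

lemma h_eq (n : ℕ) (x : ℝ) :
    hermiteFun n x = cc n * Real.exp (-(x ^ 2 / 4)) * Polynomial.aeval x (Polynomial.hermite n) := by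
  rw [hermiteFun, hermitePoly, Polynomial.hermite_eq_deriv_gaussian', iteratedDeriv_eq_iterate]
  unfold cc
  ring

lemma derivative_hermite (n : ℕ) :
    Polynomial.derivative (Polynomial.hermite (n + 1)) =
      ((n + 1 : ℕ) : Polynomial ℤ) * Polynomial.hermite n := by
  induction n with
  | zero => simp
  | succ n ih =>
    rw [Polynomial.hermite_succ (n + 1), Polynomial.derivative_sub, Polynomial.derivative_mul, ih]
    simp only [Polynomial.derivative_X, Polynomial.derivative_mul, Polynomial.derivative_natCast]
    have := Polynomial.hermite_succ n
    push_cast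
    linear_combination (-((n : Polynomial ℤ) + 1)) * this

/-- creation -/
lemma hasDeriv_h (n : ℕ) (x : ℝ) :
    HasDerivAt (hermiteFun n)
      (x / 2 * hermiteFun n x - Real.sqrt (n + 1) * hermiteFun (n + 1) x) x := by
  have e : hermiteFun n = fun x => cc n * Real.exp (-(x ^ 2 / 4)) *
      Polynomial.aeval x (Polynomial.hermite n) := funext (h_eq n)
  have h1 : HasDerivAt (fun x : ℝ => cc n * Real.exp (-(x ^ 2 / 4)))
      (cc n * (Real.exp (-(x ^ 2 / 4)) * (-(x / 2)))) x := by
    have : HasDerivAt (fun x : ℝ => -(x ^ 2 / 4)) (-(x / 2)) x := by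
      have := ((hasDerivAt_pow 2 x).div_const 4).neg
      exact this.congr_deriv (by norm_num; ring)
    exact this.exp.const_mul _
  have h2 := (Polynomial.hermite n).hasDerivAt_aeval x
  have h3 := h1.mul h2
  rw [e]
  refine HasDerivAt.congr_deriv (f := fun x => cc n * Real.exp (-(x ^ 2 / 4)) *
      Polynomial.aeval x (Polynomial.hermite n)) h3 ?_
  rw [h_eq (n + 1), ← cc_succ n, Polynomial.hermite_succ]
  simp only [map_sub, map_mul, Polynomial.aeval_X]
  ring

lemma lower_h (n : ℕ) (x : ℝ) :
    Real.sqrt n * hermiteFun (n - 1) x + Real.sqrt (n + 1) * hermiteFun (n + 1) x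
      = x * hermiteFun n x := by
  rcases n with _ | n
  · simp only [Nat.cast_zero, Real.sqrt_zero, zero_mul, zero_add]
    rw [h_eq, h_eq, ← cc_succ 0]
    simp; ring
  · have hs := Polynomial.hermite_succ (n + 1)
    rw [derivative_hermite] at hs
    rw [h_eq, h_eq, h_eq, hs, ← mul_assoc, ← mul_assoc, ← mul_assoc, ← mul_assoc, cc_succ (n + 1)]
    have := cc_succ n
    have h2 : (Real.sqrt (n + 1)) * Real.sqrt (n + 1) = n + 1 := Real.mul_self_sqrt (by positivity)
    simp only [Nat.add_sub_cancel, map_sub, map_mul, Polynomial.aeval_X, map_natCast]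
    push_cast
    rw [← this]
    linear_combination (cc (n + 1) * Real.exp (-(x ^ 2 / 4)) *
      Polynomial.aeval x (Polynomial.hermite n)) * h2

lemma deriv_h (n : ℕ) (x : ℝ) :
    HasDerivAt (hermiteFun n)
      (Real.sqrt n / 2 * hermiteFun (n - 1) x - Real.sqrt (n + 1) / 2 * hermiteFun (n + 1) x) x := by
  refine (hasDeriv_h n x).congr_deriv ?_
  linear_combination (-1 / 2) * lower_h n x

lemma cont_h (n : ℕ) : Continuous (hermiteFun n) :=
  continuous_iff_continuousAt.2 fun x => (deriv_h n x).continuousAt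

lemma poly_bound (P : Polynomial ℤ) :
    ∃ C : ℝ, ∀ x : ℝ, |Polynomial.aeval x P| ≤ C * Real.exp (x ^ 2 / 8) := by
  induction P using Polynomial.induction_on' with
  | add p q hp hq =>
    obtain ⟨C, hC⟩ := hp
    obtain ⟨D, hD⟩ := hq
    refine ⟨C + D, fun x => ?_⟩
    rw [map_add, add_mul]
    exact (abs_add_le _ _).trans (add_le_add (hC x) (hD x))
  | monomial k a =>
    refine ⟨|(a : ℝ)| * (k.factorial * Real.exp 2), fun x => ?_⟩
    have h1 := Real.pow_div_factorial_le_exp |x| (abs_nonneg x) k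
    have h2 : Real.exp |x| ≤ Real.exp 2 * Real.exp (x ^ 2 / 8) := by
      rw [← Real.exp_add]
      apply Real.exp_le_exp.2
      nlinarith [sq_nonneg (|x| - 4), sq_abs x]
    rw [div_le_iff₀ (by positivity)] at h1
    rw [Polynomial.aeval_monomial, abs_mul, abs_pow, mul_assoc]
    simp only [eq_intCast]
    gcongr
    calc |x| ^ k ≤ Real.exp |x| * k.factorial := h1
      _ ≤ (Real.exp 2 * Real.exp (x ^ 2 / 8)) * k.factorial := by gcongr
      _ = _ := by ring

lemma h_decay (n : ℕ) : ∃ C : ℝ, ∀ x : ℝ, |hermiteFun n x| ≤ C * Real.exp (-(1/8) * x ^ 2) := by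
  obtain ⟨C, hC⟩ := poly_bound (Polynomial.hermite n)
  refine ⟨cc n * C, fun x => ?_⟩
  rw [h_eq, abs_mul, abs_mul, abs_of_pos (cc_pos n), abs_of_pos (Real.exp_pos _), mul_assoc,
    mul_assoc]
  have : Real.exp (-(1/8) * x ^ 2) = Real.exp (-(x ^ 2 / 4)) * Real.exp (x ^ 2 / 8) := by
    rw [← Real.exp_add]; congr 1; ring
  rw [this]
  have := hC x
  have h0 := cc_pos n
  calc _ ≤ cc n * (Real.exp (-(x ^ 2 / 4)) * (C * Real.exp (x ^ 2 / 8))) := by gcongr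
    _ = _ := by ring

lemma int_h (n : ℕ) : Integrable (hermiteFun n) := by
  obtain ⟨C, hC⟩ := h_decay n
  refine Integrable.mono' ((integrable_exp_neg_mul_sq (b := 1/8) (by norm_num)).const_mul C)
    (cont_h n).aestronglyMeasurable (Filter.Eventually.of_forall fun x => ?_)
  exact hC x

lemma h_bdd (n : ℕ) : ∃ C : ℝ, ∀ x : ℝ, |hermiteFun n x| ≤ C := by
  obtain ⟨C, hC⟩ := h_decay n
  refine ⟨C, fun x => (hC x).trans ?_⟩
  have h0 : 0 ≤ C := by
    have := (abs_nonneg _).trans (hC 0)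
    simpa using this
  have : Real.exp (-(1/8) * x ^ 2) ≤ 1 := Real.exp_le_one_iff.2 (by nlinarith [sq_nonneg x])
  exact mul_le_of_le_one_right h0 this

lemma int_mul_h {f : ℝ → ℝ} (hf : Integrable f) (n : ℕ) :
    Integrable (fun x => f x * hermiteFun n x) := by
  obtain ⟨C, hC⟩ := h_bdd n
  exact hf.mul_bdd (c := C) (cont_h n).aestronglyMeasurable (Filter.Eventually.of_forall fun x => hC x)

lemma int2 (a b : ℕ) : Integrable (fun x => hermiteFun a x * hermiteFun b x) :=
  int_mul_h (int_h a) b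

lemma int3 (a b c : ℕ) :
    Integrable (fun x => hermiteFun a x * hermiteFun b x * hermiteFun c x) :=
  int_mul_h (int2 a b) c

/-- the basic recursion -/
lemma ladder {f f' : ℝ → ℝ} (hf : ∀ x, HasDerivAt f (f' x) x) (b : ℕ)
    (i0 : Integrable f) (i1 : Integrable f') :
    Real.sqrt (b + 1) * ∫ x, f x * hermiteFun (b + 1) x
      = Real.sqrt b / 2 * (∫ x, f x * hermiteFun (b - 1) x)
        + Real.sqrt (b + 1) / 2 * (∫ x, f x * hermiteFun (b + 1) x)
        + ∫ x, f' x * hermiteFun b x := by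
  have key := integral_mul_deriv_eq_deriv_mul_of_integrable (u := f) (u' := f')
    (v := hermiteFun b) (v' := fun x => Real.sqrt b / 2 * hermiteFun (b - 1) x
      - Real.sqrt (b + 1) / 2 * hermiteFun (b + 1) x)
    (fun x _ => hf x) (fun x _ => deriv_h b x) ?_ ?_ ?_
  · have e : (fun x => f x * (Real.sqrt b / 2 * hermiteFun (b - 1) x
      - Real.sqrt (b + 1) / 2 * hermiteFun (b + 1) x)) = fun x =>
        Real.sqrt b / 2 * (f x * hermiteFun (b - 1) x)
      - Real.sqrt (b + 1) / 2 * (f x * hermiteFun (b + 1) x) := by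
      funext x; ring
    rw [e, integral_sub ((int_mul_h i0 _).const_mul _) ((int_mul_h i0 _).const_mul _),
      integral_const_mul, integral_const_mul] at key
    linear_combination (-1) * key
  · have e : (f * fun x => (Real.sqrt b / 2 * hermiteFun (b - 1) x
      - Real.sqrt (b + 1) / 2 * hermiteFun (b + 1) x)) = fun x =>
        Real.sqrt b / 2 * (f x * hermiteFun (b - 1) x)
      - Real.sqrt (b + 1) / 2 * (f x * hermiteFun (b + 1) x) := by
      funext x; simp only [Pi.mul_apply]; ring
    rw [e]
    exact ((int_mul_h i0 _).const_mul _).sub ((int_mul_h i0 _).const_mul _)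
  · exact int_mul_h i1 b
  · exact int_mul_h i0 b

end HermAux

namespace HermAux

lemma iadd {f g : ℝ → ℝ} (hf : Integrable f) (hg : Integrable g) :
    Integrable (fun x => f x + g x) := hf.add hg

lemma ladder' {f f' : ℝ → ℝ} (hf : ∀ x, HasDerivAt f (f' x) x) (b : ℕ)
    (i0 : Integrable f) (i1 : Integrable f') :
    Real.sqrt (b + 1) * ∫ x, f x * hermiteFun (b + 1) x
      = ∫ x, (f' x + x / 2 * f x) * hermiteFun b x := by
  rw [ladder hf b i0 i1, ← integral_const_mul, ← integral_const_mul, ← integral_add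
    ((int_mul_h i0 _).const_mul _) ((int_mul_h i0 _).const_mul _), ← integral_add
    (iadd ((int_mul_h i0 _).const_mul _) ((int_mul_h i0 _).const_mul _)) (int_mul_h i1 _)]
  congr 1
  funext x
  have := lower_h b x
  linear_combination (f x / 2) * this

lemma ann_h (a : ℕ) (x : ℝ) :
    (Real.sqrt a / 2 * hermiteFun (a - 1) x - Real.sqrt (a + 1) / 2 * hermiteFun (a + 1) x)
      + x / 2 * hermiteFun a x = Real.sqrt a * hermiteFun (a - 1) x := by
  linear_combination (-1 / 2) * lower_h a x

lemma ladder2 (a b : ℕ) :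
    Real.sqrt (b + 1) * ∫ x, hermiteFun a x * hermiteFun (b + 1) x
      = Real.sqrt a * ∫ x, hermiteFun (a - 1) x * hermiteFun b x := by
  rw [ladder' (deriv_h a) b (int_h a) (((int_h _).const_mul _).sub ((int_h _).const_mul _)),
    ← integral_const_mul]
  congr 1
  funext x
  rw [ann_h]; ring

lemma h00 : ∫ x, hermiteFun 0 x * hermiteFun 0 x = 1 := by
  have e : (fun x => hermiteFun 0 x * hermiteFun 0 x) =
      fun x => (cc 0 * cc 0) * Real.exp (-(1/2) * x ^ 2) := by
    funext x
    rw [h_eq]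
    simp only [Polynomial.hermite_zero, map_one]
    have : Real.exp (-(1/2) * x ^ 2) = Real.exp (-(x ^ 2 / 4)) * Real.exp (-(x ^ 2 / 4)) := by
      rw [← Real.exp_add]; congr 1; ring
    rw [this]; ring
  rw [e, integral_const_mul, integral_gaussian]
  unfold cc
  rw [← mul_inv, Real.mul_self_sqrt (by positivity)]
  rw [show Real.pi / (1 / 2) = 2 * Real.pi by ring]
  have : Real.sqrt (2 * Real.pi) ≠ 0 := by positivity
  rw [Nat.factorial_zero, Nat.cast_one, mul_one, inv_mul_cancel₀ this]

lemma ortho (a b : ℕ) :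
    ∫ x, hermiteFun a x * hermiteFun b x = if a = b then 1 else 0 := by
  have z : ∀ a : ℕ, ∫ x, hermiteFun 0 x * hermiteFun (a + 1) x = 0 := by
    intro a
    have := ladder2 0 a
    simp only [Nat.cast_zero, Real.sqrt_zero, zero_mul] at this
    have h : Real.sqrt ((a : ℝ) + 1) ≠ 0 := by positivity
    exact (mul_eq_zero.1 this).resolve_left h
  induction b generalizing a with
  | zero =>
    rcases a with _ | a
    · simpa using h00
    · simp only [mul_comm (hermiteFun (a + 1) _)]
      simpa using z a
  | succ b ih =>
    rcases a with _ | a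
    · simpa using z b
    · have := ladder2 (a + 1) b
      have h : Real.sqrt ((b : ℝ) + 1) ≠ 0 := by positivity
      rw [Nat.add_sub_cancel, ih] at this
      apply mul_left_cancel₀ h
      rw [this]
      by_cases hab : a = b
      · subst hab; simp
      · simp [hab]

lemma sup_h (n : ℕ) (x : ℝ) : |hermiteFun n x| ≤ 2 * (n + 1) := by
  set d : ℝ → ℝ := fun x => Real.sqrt n / 2 * hermiteFun (n - 1) x
    - Real.sqrt (n + 1) / 2 * hermiteFun (n + 1) x with hd
  have id : Integrable d := ((int_h _).const_mul _).sub ((int_h _).const_mul _)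
  have h1 : ∀ y, HasDerivAt (fun y => hermiteFun n y * hermiteFun n y)
      (2 * (d y * hermiteFun n y)) y := by
    intro y
    have := (deriv_h n y).mul (deriv_h n y)
    exact this.congr_deriv (by simp only [hd]; ring)
  have i1 : Integrable (fun y => 2 * (d y * hermiteFun n y)) := (int_mul_h id n).const_mul 2
  have i2 := int2 n n
  have t := tendsto_zero_of_hasDerivAt_of_integrableOn_Iic (a := x) (fun y _ => h1 y)
    i1.integrableOn i2.integrableOn
  have e := integral_Iic_of_hasDerivAt_of_tendsto' (fun y _ => h1 y) (a := x) i1.integrableOn t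
  rw [sub_zero] at e
  set G : ℝ → ℝ := fun y => hermiteFun n y * hermiteFun n y +
    ((n / 2 : ℝ) * (hermiteFun (n - 1) y * hermiteFun (n - 1) y) +
      (((n : ℝ) + 1) / 2) * (hermiteFun (n + 1) y * hermiteFun (n + 1) y)) with hG
  have iG : Integrable G := i2.add (((int2 _ _).const_mul _).add ((int2 _ _).const_mul _))
  have hG0 : ∀ y, 0 ≤ G y := by
    intro y
    simp only [hG]
    have := mul_self_nonneg (hermiteFun n y)
    have := mul_self_nonneg (hermiteFun (n - 1) y)
    have := mul_self_nonneg (hermiteFun (n + 1) y)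
    positivity
  have hle : ∀ y, 2 * (d y * hermiteFun n y) ≤ G y := by
    intro y
    simp only [hG, hd]
    have q1 : Real.sqrt n * Real.sqrt n = n := Real.mul_self_sqrt (by positivity)
    have q2 : Real.sqrt (n + 1) * Real.sqrt (n + 1) = n + 1 := Real.mul_self_sqrt (by positivity)
    set s := Real.sqrt n
    set r := Real.sqrt (n + 1)
    set u := hermiteFun n y
    set v := hermiteFun (n - 1) y
    set w := hermiteFun (n + 1) y
    rw [← q2]
    rw [show (n : ℝ) / 2 = s * s / 2 by rw [q1]]
    nlinarith [sq_nonneg (u - (s / 2 * v - r / 2 * w)), sq_nonneg (s * v + r * w)]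
  have hI : ∫ y, G y ≤ 1 + (n + 1 / 2) := by
    simp only [hG]
    rw [integral_add i2 (iadd ((int2 _ _).const_mul _) ((int2 _ _).const_mul _)),
      integral_add ((int2 _ _).const_mul _) ((int2 _ _).const_mul _), integral_const_mul,
      integral_const_mul, ortho, ortho, ortho]
    simp only [if_true]
    linarith
  have hsq : hermiteFun n x * hermiteFun n x ≤ 1 + (n + 1 / 2) := by
    rw [← e]
    calc _ ≤ ∫ y in Set.Iic x, G y :=
          setIntegral_mono i1.integrableOn iG.integrableOn hle
      _ ≤ ∫ y, G y := setIntegral_le_integral iG (Filter.Eventually.of_forall hG0)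
      _ ≤ _ := hI
  apply abs_le_of_sq_le_sq _ (by positivity)
  have : (0 : ℝ) ≤ n := by positivity
  nlinarith

noncomputable def tt (a g b : ℕ) : ℝ := ∫ x, hermiteFun a x * hermiteFun g x * hermiteFun b x

lemma tt_bound (a g b : ℕ) : |tt a g b| ≤ 2 * (a + 1) := by
  have h1 : |tt a g b| ≤ ∫ x, (a + 1 : ℝ) * (hermiteFun g x * hermiteFun g x
      + hermiteFun b x * hermiteFun b x) := by
    unfold tt
    rw [← Real.norm_eq_abs]
    apply norm_integral_le_of_norm_le
      (((int2 g g).add (int2 b b)).const_mul _) (Filter.Eventually.of_forall fun x => ?_)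
    rw [Real.norm_eq_abs, abs_mul, abs_mul]
    have := sup_h a x
    have q := two_mul_le_add_sq |hermiteFun g x| |hermiteFun b x|
    rw [sq_abs, sq_abs] at q
    calc |hermiteFun a x| * |hermiteFun g x| * |hermiteFun b x|
        = |hermiteFun a x| * (|hermiteFun g x| * |hermiteFun b x|) := by ring
      _ ≤ (2 * (a + 1)) * (|hermiteFun g x| * |hermiteFun b x|) := by gcongr
      _ = (a + 1) * (2 * |hermiteFun g x| * |hermiteFun b x|) := by ring
      _ ≤ (a + 1) * (hermiteFun g x ^ 2 + hermiteFun b x ^ 2) := by gcongr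
      _ = _ := by simp only [Pi.add_apply]; ring
  rw [integral_const_mul, integral_add (int2 _ _) (int2 _ _), ortho, ortho] at h1
  simp only [if_true] at h1
  linarith

lemma tt_rec (a g b : ℕ) :
    Real.sqrt (b + 1) * tt a g (b + 1) = Real.sqrt a * tt (a - 1) g b
      + Real.sqrt g / 2 * tt a (g - 1) b - Real.sqrt (g + 1) / 2 * tt a (g + 1) b := by
  unfold tt
  have h1 : ∀ y, HasDerivAt (fun y => hermiteFun a y * hermiteFun g y)
      ((Real.sqrt a / 2 * (hermiteFun (a - 1) y * hermiteFun g y)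
        - Real.sqrt (a + 1) / 2 * (hermiteFun (a + 1) y * hermiteFun g y)) +
       (Real.sqrt g / 2 * (hermiteFun a y * hermiteFun (g - 1) y)
        - Real.sqrt (g + 1) / 2 * (hermiteFun a y * hermiteFun (g + 1) y))) y := by
    intro y
    exact ((deriv_h a y).mul (deriv_h g y)).congr_deriv (by ring)
  rw [ladder' h1 b (int2 a g) ((((int2 _ _).const_mul _).sub ((int2 _ _).const_mul _)).add
    (((int2 _ _).const_mul _).sub ((int2 _ _).const_mul _)))]
  rw [← integral_const_mul, ← integral_const_mul, ← integral_const_mul,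
    ← integral_add ((int3 _ _ _).const_mul _) ((int3 _ _ _).const_mul _),
    ← integral_sub (iadd ((int3 _ _ _).const_mul _) ((int3 _ _ _).const_mul _))
      ((int3 _ _ _).const_mul _)]
  congr 1
  funext x
  have := ann_h a x
  linear_combination (hermiteFun g x * hermiteFun b x) * this

lemma sqrt_le_W (a g : ℕ) : Real.sqrt a ≤ ((a : ℝ) + 1) * (g + 1) := by
  have h : Real.sqrt a ≤ (a : ℝ) + 1 := by
    rw [Real.sqrt_le_left (by positivity)]
    nlinarith [Nat.cast_nonneg (α := ℝ) a]
  have h2 : (1 : ℝ) ≤ g + 1 := by linarith [Nat.cast_nonneg (α := ℝ) g]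
  nlinarith [Nat.cast_nonneg (α := ℝ) a]

lemma tt_decay (k : ℕ) : ∃ C : ℝ, ∃ p : ℕ, 0 ≤ C ∧ ∀ a g b : ℕ,
    Real.sqrt (b + 1) ^ k * |tt a g b| ≤ C * (((a : ℝ) + 1) * (g + 1)) ^ p := by
  have base : ∀ a g b : ℕ, |tt a g b| ≤ 2 * (((a : ℝ) + 1) * (g + 1)) := by
    intro a g b
    have := tt_bound a g b
    have h2 : (1 : ℝ) ≤ g + 1 := by linarith [Nat.cast_nonneg (α := ℝ) g]
    nlinarith [Nat.cast_nonneg (α := ℝ) a]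
  induction k with
  | zero => exact ⟨2, 1, by norm_num, fun a g b => by simpa using base a g b⟩
  | succ k ih =>
    obtain ⟨C, p, hC, H⟩ := ih
    refine ⟨2 + 2 ^ (k + 1) * (C * (3 * 2 ^ p)), p + 1, by positivity, fun a g b => ?_⟩
    set W : ℝ := ((a : ℝ) + 1) * (g + 1) with hW
    have hW1 : 1 ≤ W := by
      have h2 : (1 : ℝ) ≤ g + 1 := by linarith [Nat.cast_nonneg (α := ℝ) g]
      nlinarith [Nat.cast_nonneg (α := ℝ) a]
    have hW0 : 0 ≤ W := by linarith
    rcases b with _ | b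
    · simp only [Nat.cast_zero, zero_add, Real.sqrt_one, one_pow, one_mul]
      calc |tt a g 0| ≤ 2 * W := base a g 0
        _ ≤ 2 * W ^ (p + 1) := by
          gcongr
          exact le_self_pow₀ hW1 (by omega)
        _ ≤ _ := by
          gcongr
          have : 0 ≤ 2 ^ (k + 1) * (C * (3 * 2 ^ p)) := by positivity
          linarith
    · have hs : Real.sqrt ((b + 1 : ℕ) + 1) ≤ 2 * Real.sqrt (b + 1) := by
        rw [Real.sqrt_le_left (by positivity), mul_pow, Real.sq_sqrt (by positivity)]
        push_cast
        nlinarith [Nat.cast_nonneg (α := ℝ) b]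
      have r := tt_rec a g b
      have b1 : Real.sqrt (b + 1) ^ k * |tt (a - 1) g b| ≤ C * (2 * W) ^ p := by
        refine (H _ _ _).trans (mul_le_mul_of_nonneg_left (pow_le_pow_left₀ (by positivity) ?_ p) hC)
        have : ((a - 1 : ℕ) : ℝ) ≤ a := by exact_mod_cast Nat.sub_le _ _
        nlinarith [Nat.cast_nonneg (α := ℝ) g]
      have b2 : Real.sqrt (b + 1) ^ k * |tt a (g - 1) b| ≤ C * (2 * W) ^ p := by
        refine (H _ _ _).trans (mul_le_mul_of_nonneg_left (pow_le_pow_left₀ (by positivity) ?_ p) hC)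
        have : ((g - 1 : ℕ) : ℝ) ≤ g := by exact_mod_cast Nat.sub_le _ _
        nlinarith [Nat.cast_nonneg (α := ℝ) a]
      have b3 : Real.sqrt (b + 1) ^ k * |tt a (g + 1) b| ≤ C * (2 * W) ^ p := by
        refine (H _ _ _).trans (mul_le_mul_of_nonneg_left (pow_le_pow_left₀ (by positivity) ?_ p) hC)
        push_cast
        have := mul_nonneg (Nat.cast_nonneg (α := ℝ) a) (Nat.cast_nonneg (α := ℝ) g)
        nlinarith [Nat.cast_nonneg (α := ℝ) a, Nat.cast_nonneg (α := ℝ) g]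
      have s1 : Real.sqrt a ≤ W := sqrt_le_W a g
      have s2 : Real.sqrt g ≤ W := by rw [hW, mul_comm]; exact sqrt_le_W g a
      have s3 : Real.sqrt (g + 1) ≤ 2 * W := by
        have h := sqrt_le_W (g + 1) a
        push_cast at h
        refine h.trans ?_
        have := mul_nonneg (Nat.cast_nonneg (α := ℝ) a) (Nat.cast_nonneg (α := ℝ) g)
        nlinarith [Nat.cast_nonneg (α := ℝ) a, Nat.cast_nonneg (α := ℝ) g]
      have habs : Real.sqrt (b + 1) * |tt a g (b + 1)| ≤ W * |tt (a - 1) g b|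
          + W * |tt a (g - 1) b| + W * |tt a (g + 1) b| := by
        rw [← abs_of_nonneg (Real.sqrt_nonneg ((b : ℝ) + 1)), ← abs_mul, r]
        refine (abs_sub _ _).trans (add_le_add ((abs_add_le _ _).trans (add_le_add ?_ ?_)) ?_)
        · rw [abs_mul, abs_of_nonneg (Real.sqrt_nonneg _)]; gcongr
        · rw [abs_mul, abs_of_nonneg (by positivity)]; gcongr; linarith
        · rw [abs_mul, abs_of_nonneg (by positivity)]; gcongr; linarith
      calc Real.sqrt ((b + 1 : ℕ) + 1) ^ (k + 1) * |tt a g (b + 1)|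
          ≤ (2 * Real.sqrt (b + 1)) ^ (k + 1) * |tt a g (b + 1)| := by gcongr
        _ = 2 ^ (k + 1) * (Real.sqrt (b + 1) ^ k * (Real.sqrt (b + 1) * |tt a g (b + 1)|)) := by
          ring
        _ ≤ 2 ^ (k + 1) * (Real.sqrt (b + 1) ^ k * (W * |tt (a - 1) g b|
          + W * |tt a (g - 1) b| + W * |tt a (g + 1) b|)) := by gcongr
        _ = 2 ^ (k + 1) * (W * (Real.sqrt (b + 1) ^ k * |tt (a - 1) g b|)
          + W * (Real.sqrt (b + 1) ^ k * |tt a (g - 1) b|)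
          + W * (Real.sqrt (b + 1) ^ k * |tt a (g + 1) b|)) := by ring
        _ ≤ 2 ^ (k + 1) * (W * (C * (2 * W) ^ p) + W * (C * (2 * W) ^ p)
          + W * (C * (2 * W) ^ p)) := by gcongr
        _ = (2 ^ (k + 1) * (C * (3 * 2 ^ p))) * W ^ (p + 1) := by rw [mul_pow]; ring
        _ ≤ _ := by
          gcongr
          linarith

end HermAux

namespace HermAux

lemma integral_euc {d : ℕ} (f : Fin d → ℝ → ℝ) :
    ∫ x : EuclideanSpace ℝ (Fin d), ∏ i, f i (x i) = ∏ i, ∫ t, f i t := by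
  rw [← integral_fintype_prod_volume_eq_prod]
  exact (EuclideanSpace.volume_preserving_symm_measurableEquiv_toLp (Fin d)).integral_comp'
    (fun y : Fin d → ℝ => ∏ i, f i (y i))

lemma integrable_euc {d : ℕ} (f : Fin d → ℝ → ℝ) (hf : ∀ i, Integrable (f i)) :
    Integrable (fun x : EuclideanSpace ℝ (Fin d) => ∏ i, f i (x i)) := by
  have h : Integrable (fun y : Fin d → ℝ => ∏ i, f i (y i)) := Integrable.fintype_prod hf
  exact (EuclideanSpace.volume_preserving_symm_measurableEquiv_toLp (Fin d)).integrable_comp_of_integrable h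

noncomputable def ww {d : ℕ} (α : Fin d → ℕ) : ℝ := ∏ i, ((α i : ℝ) + 1)

lemma one_le_ww {d : ℕ} (α : Fin d → ℕ) : 1 ≤ ww α := by
  unfold ww
  refine Finset.prod_induction _ (fun x : ℝ => 1 ≤ x)
    (fun a b ha hb => one_le_mul_of_one_le_of_one_le ha hb) le_rfl
    (fun i _ => by linarith [Nat.cast_nonneg (α := ℝ) (α i)])

lemma ww_pos {d : ℕ} (α : Fin d → ℕ) : 0 < ww α := lt_of_lt_of_le one_pos (one_le_ww α)

lemma summable_ww (d : ℕ) : Summable (fun α : Fin d → ℕ => ((ww α)⁻¹) ^ 2) := by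
  induction d with
  | zero => exact (hasSum_fintype _).summable
  | succ d ih =>
    have h1 : Summable (fun n : ℕ => (((n : ℝ) + 1)⁻¹) ^ 2) := by
      have := (summable_nat_add_iff 1).2 (Real.summable_one_div_nat_pow.2 (by norm_num : 1 < 2))
      refine this.congr fun n => ?_
      push_cast
      rw [one_div, inv_pow]
    have h2 := Summable.mul_of_nonneg h1 ih (fun n => by positivity) (fun n => by positivity)
    rw [← (Fin.consEquiv (fun _ : Fin (d + 1) => ℕ)).summable_iff]
    refine h2.congr fun x => ?_
    simp only [Function.comp, ww, Fin.prod_univ_succ, Fin.consEquiv_apply, Fin.cons_zero,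
      Fin.cons_succ, mul_inv, mul_pow]

lemma cont_hm (d : ℕ) (α : Fin d → ℕ) : Continuous (hermiteFunMulti d α) := by
  unfold hermiteFunMulti
  refine continuous_finsetProd _ fun i _ => (cont_h _).comp ?_
  fun_prop

lemma sup_hm (d : ℕ) (α : Fin d → ℕ) (x : EuclideanSpace ℝ (Fin d)) :
    |hermiteFunMulti d α x| ≤ 2 ^ d * ww α := by
  unfold hermiteFunMulti ww
  rw [Finset.abs_prod]
  calc ∏ i, |hermiteFun (α i) (x i)| ≤ ∏ i : Fin d, (2 * ((α i : ℝ) + 1)) :=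
        Finset.prod_le_prod (fun _ _ => abs_nonneg _) (fun i _ => sup_h _ _)
    _ = _ := by rw [Finset.prod_mul_distrib]; simp

lemma int_hm (d : ℕ) (α : Fin d → ℕ) : Integrable (hermiteFunMulti d α) :=
  integrable_euc _ fun i => int_h (α i)

lemma int_mul_hm {d : ℕ} {f : EuclideanSpace ℝ (Fin d) → ℝ} (hf : Integrable f)
    (α : Fin d → ℕ) : Integrable (fun x => f x * hermiteFunMulti d α x) :=
  hf.mul_bdd (c := 2 ^ d * ww α) (cont_hm d α).aestronglyMeasurable
    (Filter.Eventually.of_forall fun x => sup_hm d α x)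

lemma int_bdd_mul_hm {d : ℕ} {g : EuclideanSpace ℝ (Fin d) → ℝ} (hg : Continuous g) {C : ℝ}
    (hC : ∀ x, |g x| ≤ C) (α : Fin d → ℕ) : Integrable (fun x => g x * hermiteFunMulti d α x) :=
  (int_hm d α).bdd_mul (c := C) hg.aestronglyMeasurable (Filter.Eventually.of_forall fun x => hC x)

lemma ortho_hm (d : ℕ) (α β : Fin d → ℕ) :
    ∫ x, hermiteFunMulti d α x * hermiteFunMulti d β x = if α = β then 1 else 0 := by
  unfold hermiteFunMulti
  simp only [← Finset.prod_mul_distrib]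
  rw [integral_euc (fun i t => hermiteFun (α i) t * hermiteFun (β i) t)]
  simp only [ortho]
  by_cases h : α = β
  · simp [h]
  · rw [if_neg h]
    obtain ⟨i, hi⟩ := Function.ne_iff.1 h
    exact Finset.prod_eq_zero (Finset.mem_univ i) (if_neg hi)

lemma triple_hm (d : ℕ) (α γ β : Fin d → ℕ) :
    ∫ x, hermiteFunMulti d α x * hermiteFunMulti d γ x * hermiteFunMulti d β x
      = ∏ i, tt (α i) (γ i) (β i) := by
  unfold hermiteFunMulti
  simp only [← Finset.prod_mul_distrib]
  rw [integral_euc (fun i t => hermiteFun (α i) t * hermiteFun (γ i) t * hermiteFun (β i) t)]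
  rfl

lemma hm_update (d : ℕ) (α : Fin d → ℕ) (i : Fin d) (m : ℕ) (x : EuclideanSpace ℝ (Fin d)) :
    hermiteFunMulti d (Function.update α i m) x =
      hermiteFun m (x i) * ∏ j ∈ Finset.univ.erase i, hermiteFun (α j) (x j) := by
  unfold hermiteFunMulti
  rw [← Finset.mul_prod_erase _ _ (Finset.mem_univ i), Function.update_self]
  congr 1
  refine Finset.prod_congr rfl fun j hj => ?_
  rw [Function.update_of_ne (Finset.ne_of_mem_erase hj)]

lemma hm_split (d : ℕ) (α : Fin d → ℕ) (i : Fin d) (x : EuclideanSpace ℝ (Fin d)) :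
    hermiteFunMulti d α x =
      hermiteFun (α i) (x i) * ∏ j ∈ Finset.univ.erase i, hermiteFun (α j) (x j) := by
  rw [← hm_update, Function.update_eq_self]

lemma x_mul_hm (d : ℕ) (α : Fin d → ℕ) (i : Fin d) (x : EuclideanSpace ℝ (Fin d)) :
    x i * hermiteFunMulti d α x =
      Real.sqrt (α i) * hermiteFunMulti d (Function.update α i (α i - 1)) x
      + Real.sqrt (α i + 1) * hermiteFunMulti d (Function.update α i (α i + 1)) x := by
  rw [hm_update, hm_update, hm_split d α i]
  linear_combination (-(∏ j ∈ Finset.univ.erase i, hermiteFun (α j) (x j))) * lower_h (α i) (x i)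

lemma lineDeriv_hm (d : ℕ) (α : Fin d → ℕ) (i : Fin d) (x : EuclideanSpace ℝ (Fin d)) :
    HasLineDerivAt ℝ (hermiteFunMulti d α)
      (x i / 2 * hermiteFunMulti d α x
        - Real.sqrt (α i + 1) * hermiteFunMulti d (Function.update α i (α i + 1)) x) x
      (EuclideanSpace.single i 1) := by
  unfold HasLineDerivAt
  have e : (fun t : ℝ => hermiteFunMulti d α (x + t • EuclideanSpace.single i (1 : ℝ))) =
      fun t => hermiteFun (α i) (x i + t) *
        ∏ j ∈ Finset.univ.erase i, hermiteFun (α j) (x j) := by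
    funext t
    rw [hm_split d α i]
    congr 1
    · simp
    · refine Finset.prod_congr rfl fun j hj => ?_
      simp [Finset.ne_of_mem_erase hj]
  rw [e, hm_update, hm_split d α i]
  have h0 : HasDerivAt (hermiteFun (α i)) (x i / 2 * hermiteFun (α i) (x i)
      - Real.sqrt (α i + 1) * hermiteFun (α i + 1) (x i)) (x i + 0) := by
    have := hasDeriv_h (α i) (x i)
    rwa [add_zero]
  have h1 := (h0.comp_const_add (x i) 0).mul_const
    (∏ j ∈ Finset.univ.erase i, hermiteFun (α j) (x j))
  exact h1.congr_deriv (by ring)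

/-! Schwartz functions -/

lemma schwartz_bdd {d : ℕ} (φ : SchwartzMap (EuclideanSpace ℝ (Fin d)) ℝ) :
    ∃ C, ∀ x, |φ x| ≤ C := by
  obtain ⟨C, hC⟩ := φ.decay 0 0
  exact ⟨C, fun x => by simpa using hC.2 x⟩

lemma raise_coeff (d : ℕ) (i : Fin d) (φ : SchwartzMap (EuclideanSpace ℝ (Fin d)) ℝ) :
    ∃ φ' : SchwartzMap (EuclideanSpace ℝ (Fin d)) ℝ, ∀ α : Fin d → ℕ,
      Real.sqrt (α i + 1) * hermCoeff d φ (Function.update α i (α i + 1)) = hermCoeff d φ' α := by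
  have tg : Function.HasTemperateGrowth (fun x : EuclideanSpace ℝ (Fin d) => x i / 2) := by
    have : (fun x : EuclideanSpace ℝ (Fin d) => x i / 2) =
        fun x => ((1 / 2 : ℝ) • (EuclideanSpace.proj i : EuclideanSpace ℝ (Fin d) →L[ℝ] ℝ)) x := by
      funext x; simp; ring
    rw [this]
    exact ContinuousLinearMap.hasTemperateGrowth _
  set v : EuclideanSpace ℝ (Fin d) := EuclideanSpace.single i 1 with hv
  set φ1 := SchwartzMap.smulLeftCLM ℝ (fun x : EuclideanSpace ℝ (Fin d) => x i / 2) φ with h1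
  set φ2 : SchwartzMap (EuclideanSpace ℝ (Fin d)) ℝ := LineDeriv.lineDerivOp v φ with h2
  refine ⟨φ1 + φ2, fun α => ?_⟩
  have e1 : ∀ x, φ1 x = x i / 2 * φ x := fun x => by
    rw [h1, SchwartzMap.smulLeftCLM_apply_apply tg]; rfl
  have e2 : ∀ x, HasLineDerivAt ℝ φ (φ2 x) x v := fun x => by
    rw [h2, SchwartzMap.lineDerivOp_apply]
    exact (φ.differentiableAt.lineDifferentiableAt).hasLineDerivAt
  have i0 := int_mul_hm φ.integrable α
  have i0' := int_mul_hm φ.integrable (Function.update α i (α i + 1))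
  have i1 := int_mul_hm φ1.integrable α
  have i2 := int_mul_hm φ2.integrable α
  have key := integral_bilinear_hasLineDerivAt_right_eq_neg_left_of_integrable
    (μ := (volume : Measure (EuclideanSpace ℝ (Fin d))))
    (B := ContinuousLinearMap.mul ℝ ℝ) (f := φ) (f' := φ2) (g := hermiteFunMulti d α)
    (g' := fun x => x i / 2 * hermiteFunMulti d α x
        - Real.sqrt (α i + 1) * hermiteFunMulti d (Function.update α i (α i + 1)) x) (v := v)
    i2 ?_ i0 (fun x _ => e2 x) (fun x _ => lineDeriv_hm d α i x)
  · simp only [ContinuousLinearMap.mul_apply'] at key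
    have e : (fun x => φ x * (x i / 2 * hermiteFunMulti d α x
        - Real.sqrt (α i + 1) * hermiteFunMulti d (Function.update α i (α i + 1)) x)) =
        fun x => φ1 x * hermiteFunMulti d α x - Real.sqrt (α i + 1) *
          (φ x * hermiteFunMulti d (Function.update α i (α i + 1)) x) := by
      funext x; rw [e1]; ring
    rw [e, integral_sub i1 (i0'.const_mul _), integral_const_mul] at key
    unfold hermCoeff
    simp only [add_apply, add_mul]
    rw [integral_add i1 i2]
    linear_combination (-1) * key
  · have e : (fun x => ContinuousLinearMap.mul ℝ ℝ (φ x) (x i / 2 * hermiteFunMulti d α x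
        - Real.sqrt (α i + 1) * hermiteFunMulti d (Function.update α i (α i + 1)) x)) =
        fun x => φ1 x * hermiteFunMulti d α x - Real.sqrt (α i + 1) *
          (φ x * hermiteFunMulti d (Function.update α i (α i + 1)) x) := by
      funext x; rw [e1]; simp only [ContinuousLinearMap.mul_apply']; ring
    rw [e]
    exact i1.sub (i0'.const_mul _)

lemma coeff_bdd (d : ℕ) (φ : SchwartzMap (EuclideanSpace ℝ (Fin d)) ℝ) :
    ∃ C, ∀ α, |hermCoeff d φ α| ≤ C := by
  obtain ⟨B, hB⟩ := schwartz_bdd φ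
  have iφ : Integrable (fun x => φ x * φ x) :=
    φ.integrable.mul_bdd (c := B) φ.continuous.aestronglyMeasurable
      (Filter.Eventually.of_forall fun x => hB x)
  refine ⟨(∫ x, φ x * φ x) + 1, fun α => ?_⟩
  have i2 := int_mul_hm (int_hm d α) α
  have := ortho_hm d α α
  rw [if_pos rfl] at this
  rw [← this, ← integral_add iφ i2]
  unfold hermCoeff
  rw [← Real.norm_eq_abs]
  apply norm_integral_le_of_norm_le (iφ.add i2) (Filter.Eventually.of_forall fun x => ?_)
  rw [Real.norm_eq_abs]
  simp only [Pi.add_apply]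
  rw [abs_le]
  constructor <;> nlinarith [sq_nonneg (φ x + hermiteFunMulti d α x),
    sq_nonneg (φ x - hermiteFunMulti d α x), sq_nonneg (φ x), sq_nonneg (hermiteFunMulti d α x)]

lemma coeff_decay1 (d : ℕ) (i : Fin d) (k : ℕ) (φ : SchwartzMap (EuclideanSpace ℝ (Fin d)) ℝ) :
    ∃ C, ∀ α, Real.sqrt (α i + 1) ^ k * |hermCoeff d φ α| ≤ C := by
  induction k generalizing φ with
  | zero => simpa using coeff_bdd d φ
  | succ k ih =>
    obtain ⟨φ', hφ'⟩ := raise_coeff d i φ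
    obtain ⟨C, hC⟩ := ih φ'
    obtain ⟨B, hB⟩ := coeff_bdd d φ
    refine ⟨max B (2 ^ (k + 1) * C), fun α => ?_⟩
    rcases hα : α i with _ | m
    · refine le_max_of_le_left ?_
      simpa using hB α
    · refine le_max_of_le_right ?_
      have h := hφ' (Function.update α i m)
      rw [Function.update_self, Function.update_idem, ← hα, Function.update_eq_self] at h
      have h2 := hC (Function.update α i m)
      rw [← h, Function.update_self, abs_mul, abs_of_nonneg (Real.sqrt_nonneg _)] at h2
      have hs : Real.sqrt ((m + 1 : ℕ) + 1) ≤ 2 * Real.sqrt (m + 1) := by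
        rw [Real.sqrt_le_left (by positivity), mul_pow, Real.sq_sqrt (by positivity)]
        push_cast
        nlinarith [Nat.cast_nonneg (α := ℝ) m]
      calc _ ≤ (2 * Real.sqrt (m + 1)) ^ (k + 1) * |hermCoeff d φ α| := by gcongr
        _ = 2 ^ (k + 1) * (Real.sqrt (m + 1) ^ k * (Real.sqrt (m + 1) * |hermCoeff d φ α|)) := by
          ring
        _ ≤ _ := by gcongr

lemma coeff_decay (d k : ℕ) (φ : SchwartzMap (EuclideanSpace ℝ (Fin d)) ℝ) :
    ∃ C, ∀ α, ww α ^ k * |hermCoeff d φ α| ≤ C := by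
  obtain ⟨B, hB⟩ := coeff_bdd d φ
  choose C hC using fun i => coeff_decay1 d i (2 * (d * k)) φ
  rcases Nat.eq_zero_or_pos d with hd | hd
  · subst hd
    exact ⟨B, fun α => by simpa [ww] using hB α⟩
  · have : Nonempty (Fin d) := ⟨⟨0, hd⟩⟩
    refine ⟨∑ i, |C i|, fun α => ?_⟩
    obtain ⟨i, hi⟩ := Finite.exists_max α
    have h1 : ww α ≤ ((α i : ℝ) + 1) ^ d := by
      unfold ww
      calc _ ≤ ∏ _j : Fin d, ((α i : ℝ) + 1) := Finset.prod_le_prod (fun _ _ => by positivity)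
            (fun j _ => by
              have : (α j : ℝ) ≤ α i := by exact_mod_cast hi j
              linarith)
        _ = _ := by simp
    have h2 := hC i α
    rw [pow_mul, Real.sq_sqrt (by positivity), pow_mul] at h2
    have h0 := (ww_pos α).le
    calc ww α ^ k * |hermCoeff d φ α| ≤ (((α i : ℝ) + 1) ^ d) ^ k * |hermCoeff d φ α| := by gcongr
      _ ≤ C i := h2
      _ ≤ |C i| := le_abs_self _
      _ ≤ _ := Finset.single_le_sum (f := fun i => |C i|) (fun _ _ => abs_nonneg _)
        (Finset.mem_univ i)

end HermAux

namespace HermAux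

lemma inner_mul_span (d : ℕ) (ξ : EuclideanSpace ℝ (Fin d)) (f : EuclideanSpace ℝ (Fin d) → ℝ)
    (hf : f ∈ Submodule.span ℝ (Set.range (hermiteFunMulti d))) :
    (fun x => inner ℝ x ξ * f x) ∈ Submodule.span ℝ (Set.range (hermiteFunMulti d)) := by
  induction hf using Submodule.span_induction with
  | mem f hf =>
    obtain ⟨α, rfl⟩ := hf
    have e : (fun x => inner ℝ x ξ * hermiteFunMulti d α x) = ∑ i, ξ i •
        (Real.sqrt (α i) • hermiteFunMulti d (Function.update α i (α i - 1))
        + Real.sqrt (α i + 1) • hermiteFunMulti d (Function.update α i (α i + 1))) := by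
      funext x
      simp only [Finset.sum_apply, Pi.smul_apply, Pi.add_apply, smul_eq_mul, ← x_mul_hm]
      rw [PiLp.inner_apply, Finset.sum_mul]
      refine Finset.sum_congr rfl fun i _ => ?_
      simp
      ring
    rw [e]
    refine Submodule.sum_mem _ fun i _ => Submodule.smul_mem _ _ (Submodule.add_mem _
      (Submodule.smul_mem _ _ (Submodule.subset_span ⟨_, rfl⟩))
      (Submodule.smul_mem _ _ (Submodule.subset_span ⟨_, rfl⟩)))
  | zero =>
    have e : (fun x => inner ℝ x ξ * (0 : EuclideanSpace ℝ (Fin d) → ℝ) x) = 0 := by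
      funext x; simp
    rw [e]
    exact Submodule.zero_mem _
  | add f g _ _ hf hg =>
    have := Submodule.add_mem _ hf hg
    convert this using 1
    funext x
    simp only [Pi.add_apply]; ring
  | smul c f _ hf =>
    have := Submodule.smul_mem _ c hf
    convert this using 1
    funext x
    simp only [Pi.smul_apply, smul_eq_mul]; ring

lemma pow_mul_span (d : ℕ) (ξ : EuclideanSpace ℝ (Fin d)) (k : ℕ) :
    (fun x => inner ℝ x ξ ^ k * hermiteFunMulti d 0 x)
      ∈ Submodule.span ℝ (Set.range (hermiteFunMulti d)) := by
  induction k with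
  | zero =>
    have e : (fun x => inner ℝ x ξ ^ 0 * hermiteFunMulti d 0 x) = hermiteFunMulti d 0 := by
      funext x; simp
    rw [e]
    exact Submodule.subset_span ⟨0, rfl⟩
  | succ k ih =>
    have := inner_mul_span d ξ _ ih
    convert this using 1
    funext x
    ring

lemma span_zero {d : ℕ} {g : EuclideanSpace ℝ (Fin d) → ℝ} (hg : Continuous g) {C : ℝ}
    (hC : ∀ x, |g x| ≤ C) (h0 : ∀ β, ∫ x, g x * hermiteFunMulti d β x = 0)
    (f : EuclideanSpace ℝ (Fin d) → ℝ)
    (hf : f ∈ Submodule.span ℝ (Set.range (hermiteFunMulti d))) :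
    Integrable (fun x => g x * f x) ∧ ∫ x, g x * f x = 0 := by
  induction hf using Submodule.span_induction with
  | mem f hf =>
    obtain ⟨α, rfl⟩ := hf
    exact ⟨int_bdd_mul_hm hg hC α, h0 α⟩
  | zero => simp
  | add f₁ f₂ _ _ hf hg =>
    simp only [Pi.add_apply, mul_add]
    refine ⟨hf.1.add hg.1, ?_⟩
    rw [integral_add hf.1 hg.1, hf.2, hg.2, add_zero]
  | smul c f _ hf =>
    simp only [Pi.smul_apply, smul_eq_mul, mul_left_comm _ c]
    refine ⟨hf.1.const_mul c, ?_⟩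
    rw [integral_const_mul, hf.2, mul_zero]

lemma hm_zero (d : ℕ) (x : EuclideanSpace ℝ (Fin d)) :
    hermiteFunMulti d 0 x = cc 0 ^ d * Real.exp (-(‖x‖ ^ 2 / 4)) := by
  unfold hermiteFunMulti
  simp only [Pi.zero_apply, h_eq, Polynomial.hermite_zero, map_one, mul_one]
  rw [Finset.prod_mul_distrib, ← Real.exp_sum, EuclideanSpace.norm_sq_eq]
  simp [Finset.sum_div]

lemma exp_int (d : ℕ) (c : ℝ) :
    Integrable (fun x : EuclideanSpace ℝ (Fin d) =>
      Real.exp (c * ‖x‖) * Real.exp (-(‖x‖ ^ 2 / 4))) := by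
  have h := (GaussianFourier.integrable_cexp_neg_mul_sq_norm_add (V := EuclideanSpace ℝ (Fin d))
    (b := (1 / 8 : ℝ)) (by rw [Complex.ofReal_re]; norm_num) 0 0).norm
  refine (h.const_mul (Real.exp (2 * c ^ 2))).mono' (by fun_prop)
    (Filter.Eventually.of_forall fun x => ?_)
  rw [Complex.norm_exp, Real.norm_eq_abs, abs_of_pos (by positivity), ← Real.exp_add,
    ← Real.exp_add]
  apply Real.exp_le_exp.2
  have : ((-((1 / 8 : ℝ) : ℂ) * (‖x‖ : ℂ) ^ 2 + 0 * ((inner ℝ 0 x : ℝ) : ℂ))).re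
      = -(1 / 8) * ‖x‖ ^ 2 := by
    rw [zero_mul, add_zero, ← Complex.ofReal_pow, ← Complex.ofReal_neg, ← Complex.ofReal_mul,
      Complex.ofReal_re]
  rw [this]
  nlinarith [sq_nonneg (‖x‖ - 4 * c)]

open FourierTransform in
lemma complete {d : ℕ} {g : EuclideanSpace ℝ (Fin d) → ℝ} (hg : Continuous g) {C : ℝ}
    (hC : ∀ x, |g x| ≤ C) (h0 : ∀ β, ∫ x, g x * hermiteFunMulti d β x = 0)
    (x : EuclideanSpace ℝ (Fin d)) : g x = 0 := by
  set F : EuclideanSpace ℝ (Fin d) → ℂ := fun x => ((g x * hermiteFunMulti d 0 x : ℝ) : ℂ) with hF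
  have cF : Continuous F := Complex.continuous_ofReal.comp (hg.mul (cont_hm d 0))
  have iF : Integrable F := (int_bdd_mul_hm hg hC 0).ofReal
  have hC0 : 0 ≤ C := (abs_nonneg _).trans (hC 0)
  have four : 𝓕 F = 0 := by
    funext ξ
    rw [Real.fourier_eq']
    have hs := hasSum_integral_of_dominated_convergence
      (μ := (volume : Measure (EuclideanSpace ℝ (Fin d))))
      (F := fun (k : ℕ) x => (((-2 * Real.pi * inner ℝ x ξ : ℝ) : ℂ) * Complex.I) ^ k
        / (k.factorial : ℂ) * F x)
      (f := fun x => Complex.exp (((-2 * Real.pi * inner ℝ x ξ : ℝ) : ℂ) * Complex.I) • F x)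
      (fun (k : ℕ) x => |(-2 * Real.pi * inner ℝ x ξ : ℝ)| ^ k / k.factorial * ‖F x‖)
      ?_ ?_ ?_ ?_ ?_
    · have z : ∀ k : ℕ, ∫ x, (((-2 * Real.pi * inner ℝ x ξ : ℝ) : ℂ) * Complex.I) ^ k
        / (k.factorial : ℂ) * F x = 0 := by
        intro k
        have e : (fun x => (((-2 * Real.pi * inner ℝ x ξ : ℝ) : ℂ) * Complex.I) ^ k
          / (k.factorial : ℂ) * F x) = fun x => (((-2 * Real.pi : ℝ) : ℂ) * Complex.I) ^ k
          / (k.factorial : ℂ) * ((g x * (inner ℝ x ξ ^ k * hermiteFunMulti d 0 x) : ℝ) : ℂ) := by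
          funext x
          simp only [hF]
          push_cast
          ring
        rw [e, integral_const_mul, integral_complex_ofReal,
          (span_zero hg hC h0 _ (pow_mul_span d ξ k)).2]
        simp
      simp only [z] at hs
      exact hs.unique hasSum_zero
    · intro k
      refine Continuous.aestronglyMeasurable ?_
      fun_prop
    · intro k
      refine Filter.Eventually.of_forall fun x => ?_
      simp
    · refine Filter.Eventually.of_forall fun x => ?_
      exact (Real.summable_pow_div_factorial _).mul_right _
    · have e : (fun x => ∑' k : ℕ, |(-2 * Real.pi * inner ℝ x ξ : ℝ)| ^ k / k.factorial * ‖F x‖)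
          = fun x => Real.exp |(-2 * Real.pi * inner ℝ x ξ : ℝ)| * ‖F x‖ := by
        funext x
        rw [tsum_mul_right, Real.exp_eq_exp_ℝ, NormedSpace.exp_eq_tsum_div]
      rw [e]
      refine ((exp_int d (2 * Real.pi * ‖ξ‖)).const_mul (C * cc 0 ^ d)).mono' ?_
        (Filter.Eventually.of_forall fun x => ?_)
      · refine Continuous.aestronglyMeasurable ?_
        fun_prop
      · rw [Real.norm_eq_abs, abs_of_nonneg (by positivity)]
        have h1 : |(-2 * Real.pi * inner ℝ x ξ : ℝ)| ≤ 2 * Real.pi * ‖ξ‖ * ‖x‖ := by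
          rw [abs_mul, show |(-2 * Real.pi : ℝ)| = 2 * Real.pi by
            rw [neg_mul, abs_neg, abs_of_pos (by positivity)]]
          have := abs_real_inner_le_norm x ξ
          calc _ ≤ 2 * Real.pi * (‖x‖ * ‖ξ‖) := by gcongr
            _ = _ := by ring
        have h2 : ‖F x‖ ≤ C * (cc 0 ^ d * Real.exp (-(‖x‖ ^ 2 / 4))) := by
          simp only [hF]
          rw [Complex.norm_real, Real.norm_eq_abs, abs_mul, ← hm_zero]
          have : 0 ≤ hermiteFunMulti d 0 x := by
            rw [hm_zero]; have := cc_pos 0; positivity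
          rw [abs_of_nonneg this]
          gcongr
          exact hC x
        calc _ ≤ Real.exp (2 * Real.pi * ‖ξ‖ * ‖x‖) *
              (C * (cc 0 ^ d * Real.exp (-(‖x‖ ^ 2 / 4)))) := by gcongr
          _ = _ := by ring
    · refine Filter.Eventually.of_forall fun x => ?_
      rw [smul_eq_mul]
      refine HasSum.mul_right _ ?_
      rw [Complex.exp_eq_exp_ℂ]
      exact NormedSpace.expSeries_div_hasSum_exp _
  have inv := cF.fourierInv_fourier_eq iF (by rw [four]; exact integrable_zero _ _ _)
  have hx : F x = 0 := by
    rw [← inv, four, Real.fourierInv_eq']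
    simp
  simp only [hF] at hx
  have hx' : g x * hermiteFunMulti d 0 x = 0 := by exact_mod_cast hx
  refine (mul_eq_zero.1 hx').resolve_right ?_
  rw [hm_zero]
  have := cc_pos 0
  positivity

end HermAux

namespace HermAux

lemma summable_coeff (d p : ℕ) (φ : SchwartzMap (EuclideanSpace ℝ (Fin d)) ℝ) :
    Summable (fun α => ww α ^ p * |hermCoeff d φ α|) := by
  obtain ⟨C, hC⟩ := coeff_decay d (p + 2) φ
  refine Summable.of_nonneg_of_le (fun α => by have := ww_pos α; positivity) (fun α => ?_)
    ((summable_ww d).mul_left C)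
  have h := hC α
  have hw := ww_pos α
  calc ww α ^ p * |hermCoeff d φ α| = (ww α ^ (p + 2) * |hermCoeff d φ α|) * ((ww α)⁻¹) ^ 2 := by
        field_simp
        ring
    _ ≤ _ := by gcongr

lemma summable_coeff_sq (d r : ℕ) (φ : SchwartzMap (EuclideanSpace ℝ (Fin d)) ℝ) :
    Summable (fun α => ww α ^ (2 * r) * hermCoeff d φ α ^ 2) := by
  obtain ⟨C, hC⟩ := coeff_decay d (r + 1) φ
  refine Summable.of_nonneg_of_le (fun α => by have := ww_pos α; positivity) (fun α => ?_)
    ((summable_ww d).mul_left (C ^ 2))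
  have h := hC α
  have hw := ww_pos α
  calc ww α ^ (2 * r) * hermCoeff d φ α ^ 2
      = (ww α ^ (r + 1) * |hermCoeff d φ α|) ^ 2 * ((ww α)⁻¹) ^ 2 := by
        rw [mul_pow, sq_abs]
        field_simp
        ring
    _ ≤ _ := by gcongr

lemma L_le (d : ℕ) (α : Fin d → ℕ) : (((2 * ∑ i, α i) + d : ℕ) : ℝ) ≤ 2 * d * ww α := by
  have h1 : ∀ i, (α i : ℝ) + 1 ≤ ww α := by
    intro i
    unfold ww
    rw [← Finset.mul_prod_erase _ _ (Finset.mem_univ i)]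
    have : (1 : ℝ) ≤ ∏ j ∈ Finset.univ.erase i, ((α j : ℝ) + 1) :=
      Finset.prod_induction _ (fun x : ℝ => 1 ≤ x)
        (fun a b ha hb => one_le_mul_of_one_le_of_one_le ha hb) le_rfl
        (fun i _ => by linarith [Nat.cast_nonneg (α := ℝ) (α i)])
    exact le_mul_of_one_le_right (by positivity) this
  have h2 : ∑ i : Fin d, ((α i : ℝ) + 1) ≤ ∑ _i : Fin d, ww α := Finset.sum_le_sum fun i _ => h1 i
  rw [Finset.sum_add_distrib] at h2
  simp only [Finset.sum_const, Finset.card_univ, Fintype.card_fin, nsmul_eq_mul, mul_one] at h2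
  push_cast
  have : (0 : ℝ) ≤ d := by positivity
  linarith

lemma ww_le (d : ℕ) (α : Fin d → ℕ) : ww α ≤ (((2 * ∑ i, α i) + d : ℕ) : ℝ) ^ d := by
  unfold ww
  calc _ ≤ ∏ _j : Fin d, (((2 * ∑ i, α i) + d : ℕ) : ℝ) :=
        Finset.prod_le_prod (fun _ _ => by positivity) (fun j _ => by
          have h1 : α j ≤ ∑ i, α i := Finset.single_le_sum (fun _ _ => Nat.zero_le _)
            (Finset.mem_univ j)
          have h2 := j.pos
          have : α j + 1 ≤ (2 * ∑ i, α i) + d := by omega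
          exact_mod_cast this)
    _ = _ := by simp

lemma summable_norm (d r : ℕ) (φ : SchwartzMap (EuclideanSpace ℝ (Fin d)) ℝ) :
    Summable (fun β : Fin d → ℕ =>
      (((2 * ∑ i, β i) + d : ℕ) : ℝ) ^ (2 * r) * hermCoeff d φ β ^ 2) := by
  refine Summable.of_nonneg_of_le (fun α => by positivity) (fun α => ?_)
    ((summable_coeff_sq d r φ).mul_left ((2 * (d : ℝ)) ^ (2 * r)))
  rw [← mul_assoc, ← mul_pow]
  gcongr
  exact L_le d α

noncomputable def SS (d : ℕ) : ℝ := ∑' α : Fin d → ℕ, ((ww α)⁻¹) ^ 2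

lemma SS_nonneg (d : ℕ) : 0 ≤ SS d := tsum_nonneg fun _ => by positivity

lemma coeff_l1 (d p : ℕ) (φ : SchwartzMap (EuclideanSpace ℝ (Fin d)) ℝ) :
    ∑' α, ww α ^ p * |hermCoeff d φ α| ≤ Real.sqrt (SS d) *
      hermNorm d (d * (p + 1)) (fun z => φ z) := by
  refine (summable_coeff d p φ).tsum_le_of_sum_le fun s => ?_
  have h := Real.sum_mul_le_sqrt_mul_sqrt s (fun α => (ww α)⁻¹)
    (fun α => ww α ^ (p + 1) * |hermCoeff d φ α|)
  have e : ∀ α ∈ s, (ww α)⁻¹ * (ww α ^ (p + 1) * |hermCoeff d φ α|)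
      = ww α ^ p * |hermCoeff d φ α| := by
    intro α _
    have := ww_pos α
    field_simp
    ring
  rw [Finset.sum_congr rfl e] at h
  refine h.trans (mul_le_mul ?_ ?_ (Real.sqrt_nonneg _) (Real.sqrt_nonneg _))
  · exact Real.sqrt_le_sqrt ((summable_ww d).sum_le_tsum s (fun _ _ => by positivity))
  · refine Real.sqrt_le_sqrt ?_
    calc _ ≤ ∑ β ∈ s, (((2 * ∑ i, β i) + d : ℕ) : ℝ) ^ (2 * (d * (p + 1))) *
          hermCoeff d φ β ^ 2 := by
          refine Finset.sum_le_sum fun β _ => ?_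
          rw [mul_pow, sq_abs]
          gcongr
          have h1 := ww_le d β
          have h0 := (ww_pos β).le
          calc (ww β ^ (p + 1)) ^ 2 ≤ (((((2 * ∑ i, β i) + d : ℕ) : ℝ) ^ d) ^ (p + 1)) ^ 2 := by
                gcongr
            _ = _ := by rw [← pow_mul, ← pow_mul]; congr 1; ring
      _ ≤ _ := (summable_norm d (d * (p + 1)) φ).sum_le_tsum s (fun _ _ => by positivity)

lemma expansion (d : ℕ) (φ : SchwartzMap (EuclideanSpace ℝ (Fin d)) ℝ)
    (x : EuclideanSpace ℝ (Fin d)) :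
    HasSum (fun α => hermCoeff d φ α * hermiteFunMulti d α x) (φ x) := by
  set u : (Fin d → ℕ) → ℝ := fun α => 2 ^ d * (ww α ^ 1 * |hermCoeff d φ α|) with hu
  have su : Summable u := (summable_coeff d 1 φ).mul_left _
  have bd : ∀ α x, ‖hermCoeff d φ α * hermiteFunMulti d α x‖ ≤ u α := by
    intro α x
    rw [Real.norm_eq_abs, abs_mul]
    have := sup_hm d α x
    calc _ ≤ |hermCoeff d φ α| * (2 ^ d * ww α) := by gcongr
      _ = _ := by simp only [hu]; ring
  set s : EuclideanSpace ℝ (Fin d) → ℝ :=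
    fun x => ∑' α, hermCoeff d φ α * hermiteFunMulti d α x with hs
  have hsum : ∀ x, Summable (fun α => hermCoeff d φ α * hermiteFunMulti d α x) :=
    fun x => Summable.of_norm_bounded su (fun α => bd α x)
  have cs : Continuous s := continuous_tsum (fun α => continuous_const.mul (cont_hm d α)) su bd
  have bs : ∀ x, |s x| ≤ ∑' α, u α := fun x => tsum_of_norm_bounded su.hasSum (fun α => bd α x)
  obtain ⟨B, hB⟩ := schwartz_bdd φ
  have is : ∀ β, ∫ x, s x * hermiteFunMulti d β x = hermCoeff d φ β := by
    intro β
    have i2 : ∀ α, Integrable (fun x => hermCoeff d φ α * hermiteFunMulti d α x *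
        hermiteFunMulti d β x) := fun α => int_mul_hm ((int_hm d α).const_mul _) β
    have H := hasSum_integral_of_summable_integral_norm i2 ?_
    · have e : (fun x => ∑' α, hermCoeff d φ α * hermiteFunMulti d α x * hermiteFunMulti d β x)
          = fun x => s x * hermiteFunMulti d β x := by
        funext x
        rw [tsum_mul_right]
      rw [e] at H
      refine H.unique ?_
      have e2 : ∀ α, ∫ x, hermCoeff d φ α * hermiteFunMulti d α x * hermiteFunMulti d β x
          = if α = β then hermCoeff d φ β else 0 := by
        intro α
        simp only [mul_assoc]
        rw [integral_const_mul, ortho_hm]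
        by_cases h : α = β
        · simp [h]
        · simp [h]
      simp only [e2]
      convert hasSum_ite_eq β (hermCoeff d φ β) using 1
    · refine Summable.of_nonneg_of_le (fun α => integral_nonneg fun x => norm_nonneg _)
        (fun α => ?_) (su.mul_right (∫ x, ‖hermiteFunMulti d β x‖))
      rw [← integral_const_mul]
      refine integral_mono (i2 α).norm ((int_hm d β).norm.const_mul _) fun x => ?_
      simp only [norm_mul (hermCoeff d φ α * hermiteFunMulti d α x)]
      exact mul_le_mul_of_nonneg_right (bd α x) (norm_nonneg _)
  have z := complete (g := fun x => φ x - s x) (φ.continuous.sub cs)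
    (C := B + ∑' α, u α) (fun x => (abs_sub _ _).trans (add_le_add (hB x) (bs x))) (fun β => by
      simp only [sub_mul]
      rw [integral_sub (int_bdd_mul_hm φ.continuous hB β) (int_bdd_mul_hm cs bs β), is β]
      exact sub_self _) x
  have : φ x = s x := by linarith
  rw [this]
  exact (hsum x).hasSum

lemma coeff_mul (d : ℕ) (φ ψ χ : SchwartzMap (EuclideanSpace ℝ (Fin d)) ℝ)
    (h : ∀ y, χ y = φ y * ψ y) (β : Fin d → ℕ) :
    HasSum (fun q : (Fin d → ℕ) × (Fin d → ℕ) => hermCoeff d φ q.1 * hermCoeff d ψ q.2 *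
      ∏ i, tt (q.1 i) (q.2 i) (β i)) (hermCoeff d χ β) := by
  set F : (Fin d → ℕ) × (Fin d → ℕ) → EuclideanSpace ℝ (Fin d) → ℝ := fun q x =>
    (hermCoeff d φ q.1 * hermiteFunMulti d q.1 x) * (hermCoeff d ψ q.2 * hermiteFunMulti d q.2 x)
      * hermiteFunMulti d β x with hF
  have bd : ∀ (φ : SchwartzMap (EuclideanSpace ℝ (Fin d)) ℝ) α x,
      ‖hermCoeff d φ α * hermiteFunMulti d α x‖ ≤ 2 ^ d * (ww α ^ 1 * |hermCoeff d φ α|) := by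
    intro φ α x
    rw [Real.norm_eq_abs, abs_mul]
    have := sup_hm d α x
    calc _ ≤ |hermCoeff d φ α| * (2 ^ d * ww α) := by gcongr
      _ = _ := by ring
  have iF : ∀ q, Integrable (F q) := by
    intro q
    have := int_mul_hm (((int_mul_hm (int_hm d q.1) q.2)).const_mul
      (hermCoeff d φ q.1 * hermCoeff d ψ q.2)) β
    refine this.congr (Filter.Eventually.of_forall fun x => ?_)
    simp only [hF]; ring
  have su := Summable.mul_of_nonneg ((summable_coeff d 1 φ).mul_left (2 ^ d))
    ((summable_coeff d 1 ψ).mul_left (2 ^ d))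
    (fun α => by have := ww_pos α; positivity) (fun α => by have := ww_pos α; positivity)
  have H := hasSum_integral_of_summable_integral_norm iF ?_
  · have e : (fun x => ∑' q, F q x) = fun x => χ x * hermiteFunMulti d β x := by
      funext x
      simp only [hF]
      rw [tsum_mul_right, h x]
      congr 1
      refine HasSum.tsum_eq ?_
      refine (expansion d φ x).mul (expansion d ψ x) ?_
      refine Summable.of_norm_bounded su fun q => ?_
      rw [norm_mul]
      exact mul_le_mul (bd φ _ x) (bd ψ _ x) (norm_nonneg _) (by have := ww_pos q.1; positivity)
    rw [e] at H
    have e2 : ∀ q, ∫ x, F q x = hermCoeff d φ q.1 * hermCoeff d ψ q.2 *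
        ∏ i, tt (q.1 i) (q.2 i) (β i) := by
      intro q
      rw [← triple_hm, ← integral_const_mul]
      congr 1
      funext x
      simp only [hF]; ring
    simp only [e2] at H
    exact H
  · refine Summable.of_nonneg_of_le (fun q => integral_nonneg fun x => norm_nonneg _)
      (fun q => ?_) (su.mul_right (∫ x, ‖hermiteFunMulti d β x‖))
    rw [← integral_const_mul]
    refine integral_mono (iF q).norm ((int_hm d β).norm.const_mul _) fun x => ?_
    simp only [hF]
    rw [norm_mul, norm_mul]
    refine mul_le_mul_of_nonneg_right ?_ (norm_nonneg _)
    exact mul_le_mul (bd φ _ x) (bd ψ _ x) (norm_nonneg _) (by have := ww_pos q.1; positivity)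

lemma tt_prod (d k : ℕ) : ∃ (C : ℝ) (p : ℕ), 0 ≤ C ∧ ∀ α γ β : Fin d → ℕ,
    ww β ^ k * |∏ i, tt (α i) (γ i) (β i)| ≤ C * (ww α ^ p * ww γ ^ p) := by
  obtain ⟨C, p, hC, H⟩ := tt_decay (2 * k)
  refine ⟨C ^ d, p, by positivity, fun α γ β => ?_⟩
  have h : ∏ i, (((β i : ℝ) + 1) ^ k * |tt (α i) (γ i) (β i)|) ≤
      ∏ i, (C * (((α i : ℝ) + 1) * ((γ i : ℝ) + 1)) ^ p) := by
    refine Finset.prod_le_prod (fun _ _ => by positivity) fun i _ => ?_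
    have := H (α i) (γ i) (β i)
    rwa [pow_mul, Real.sq_sqrt (by positivity)] at this
  rw [Finset.prod_mul_distrib, Finset.prod_mul_distrib, Finset.prod_pow, Finset.prod_pow,
    Finset.prod_mul_distrib, ← Finset.abs_prod] at h
  simp only [Finset.prod_const, Finset.card_univ, Fintype.card_fin, mul_pow] at h
  exact h

lemma final (d n : ℕ) :
    ∃ r s : ℕ, ∃ C : ℝ,
      ∀ (φ ψ χ : SchwartzMap (EuclideanSpace ℝ (Fin d)) ℝ),
        (∀ y, χ y = φ y * ψ y) →
        hermNorm d n (fun z => χ z) ≤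
          C * hermNorm d r (fun z => φ z) * hermNorm d s (fun z => ψ z) := by
  obtain ⟨C, p, hC, H⟩ := tt_prod d (n + 1)
  refine ⟨d * (p + 1), d * (p + 1), (2 * (d : ℝ)) ^ n * √(SS d) * C * √(SS d) * √(SS d),
    fun φ ψ χ h => ?_⟩
  have l1 := coeff_l1 d p φ
  have l2 := coeff_l1 d p ψ
  have s1 := summable_coeff d p φ
  have s2 := summable_coeff d p ψ
  set A := ∑' α, ww α ^ p * |hermCoeff d φ α| with hA
  set B := ∑' α, ww α ^ p * |hermCoeff d ψ α| with hB
  have A0 : 0 ≤ A := tsum_nonneg fun α => by have := ww_pos α; positivity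
  have B0 : 0 ≤ B := tsum_nonneg fun α => by have := ww_pos α; positivity
  have s3 := Summable.mul_of_nonneg s1 s2
    (fun α => by have := ww_pos α; positivity) (fun α => by have := ww_pos α; positivity)
  have hs := (s1.hasSum.mul s2.hasSum s3).mul_left C
  have key : ∀ β, ww β ^ (n + 1) * |hermCoeff d χ β| ≤ C * (A * B) := by
    intro β
    have h1 := (coeff_mul d φ ψ χ h β).mul_left (ww β ^ (n + 1))
    have h2 := tsum_of_norm_bounded (f := fun q : (Fin d → ℕ) × (Fin d → ℕ) =>
      ww β ^ (n + 1) * (hermCoeff d φ q.1 * hermCoeff d ψ q.2 *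
      ∏ i, tt (q.1 i) (q.2 i) (β i))) hs (fun q => ?_)
    · rw [h1.tsum_eq, Real.norm_eq_abs, abs_mul, abs_of_pos (pow_pos (ww_pos β) _)] at h2
      exact h2
    · rw [Real.norm_eq_abs, abs_mul, abs_of_pos (pow_pos (ww_pos β) _), abs_mul, abs_mul]
      calc _ = |hermCoeff d φ q.1| * |hermCoeff d ψ q.2| *
            (ww β ^ (n + 1) * |∏ i, tt (q.1 i) (q.2 i) (β i)|) := by ring
        _ ≤ |hermCoeff d φ q.1| * |hermCoeff d ψ q.2| * (C * (ww q.1 ^ p * ww q.2 ^ p)) :=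
            mul_le_mul_of_nonneg_left (H _ _ _) (by positivity)
        _ = _ := by ring
  set M := C * (A * B) with hM
  have M0 : 0 ≤ M := by positivity
  have t : ∑' β : Fin d → ℕ, (((2 * ∑ i, β i) + d : ℕ) : ℝ) ^ (2 * n) * hermCoeff d χ β ^ 2
      ≤ ((2 * (d : ℝ)) ^ n * M) ^ 2 * SS d := by
    unfold SS
    rw [← tsum_mul_left]
    refine (summable_norm d n χ).tsum_le_tsum (fun β => ?_) ((summable_ww d).mul_left _)
    have hw := ww_pos β
    calc _ ≤ (2 * (d : ℝ) * ww β) ^ (2 * n) * hermCoeff d χ β ^ 2 := by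
          gcongr
          exact L_le d β
      _ = ((2 * (d : ℝ)) ^ n * (ww β ^ (n + 1) * |hermCoeff d χ β|)) ^ 2 * ((ww β)⁻¹) ^ 2 := by
          rw [mul_pow _ _ 2, mul_pow _ _ 2, sq_abs]
          field_simp
          ring
      _ ≤ _ := by
          have := key β
          gcongr
  calc hermNorm d n (fun z => χ z) ≤ √(((2 * (d : ℝ)) ^ n * M) ^ 2 * SS d) :=
        Real.sqrt_le_sqrt t
    _ = (2 * (d : ℝ)) ^ n * M * √(SS d) := by
        rw [Real.sqrt_mul (by positivity), Real.sqrt_sq (by positivity)]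
    _ ≤ (2 * (d : ℝ)) ^ n * (C * ((√(SS d) * hermNorm d (d * (p + 1)) (fun z => φ z)) *
          (√(SS d) * hermNorm d (d * (p + 1)) (fun z => ψ z)))) * √(SS d) := by
        have := mul_le_mul l1 l2 B0 (A0.trans l1)
        rw [hM]
        gcongr
    _ = _ := by ring

end HermAux

/-- For every `n` there exist `r, s ∈ ℕ` and a constant `C_n` such that
`|φψ|_n ≤ C_n |φ|_r |ψ|_s` for all Schwartz functions `φ, ψ`. -/
theorem hermNorm_mul_le (d n : ℕ) :
    ∃ r s : ℕ, ∃ C : ℝ,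
      ∀ (φ ψ χ : SchwartzMap (EuclideanSpace ℝ (Fin d)) ℝ),
        (∀ y, χ y = φ y * ψ y) →
        hermNorm d n (fun z => χ z) ≤
          C * hermNorm d r (fun z => φ z) * hermNorm d s (fun z => ψ z) := by
  exact HermAux.final d n
end
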